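/- arXiv:2307.08497 — 9 statements merged into one kernel-verified Lean document; each statement's English description precedes it below -/
import Mathlib

section
/- Let U be a set of vertices of a graph G, and suppose there exist u ∈ U and k ∈ ℕ such that dist_G(u, u') ≤ 2k for all u' ∈ U. Then the induced subgraph G[B_G(U, k)] has radius at most 3k; in particular, G[B_G(U, k)] is connected. -/
open SimpleGraph

namespace RadialPaper

variable {V W N : Type*}

/-- The ball of radius `r` around a set `U` of vertices of `G`. -/
def ballSet (G : SimpleGraph V) (U : Set V) (r : ℕ) : Set V :=
  {v | ∃ u ∈ U, G.edist u v ≤ (r : ℕ∞)}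

/-- `G` has radius at most `r`: some vertex has distance at most `r` from every vertex.
The empty graph has radius `0`; a nonempty disconnected graph has radius `∞`, hence
satisfies `radiusLE` for no `r`. -/
def radiusLE (G : SimpleGraph V) (r : ℕ) : Prop :=
  Nonempty V → ∃ v : V, ∀ w : V, G.edist v w ≤ (r : ℕ∞)

/-- `(Hg, B)` is a graph-decomposition of `G` modelled on `Hg`. -/
def IsGraphDecomp (G : SimpleGraph V) (Hg : SimpleGraph N) (B : N → Set V) : Prop :=
  (∀ v : V, ∃ h : N, v ∈ B h) ∧
  (∀ ⦃u v : V⦄, G.Adj u v → ∃ h : N, u ∈ B h ∧ v ∈ B h) ∧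
  (∀ v : V, (Hg.induce {h : N | v ∈ B h}).Connected)

/-- A subgraph `X` of `G` is `c`-quasi-geodesic. -/
def IsQuasiGeodesic (G : SimpleGraph V) (X : G.Subgraph) (c : ℕ) : Prop :=
  ∀ u v : X.verts, X.coe.edist u v ≤ (c : ℕ∞) * G.edist (u : V) (v : V)

/-- The subgraph `Y` of `G` is a `(≥ k)`-subdivision of the graph `X`. -/
def IsSubdivGE (k : ℕ) (X : SimpleGraph W) {G : SimpleGraph V} (Y : G.Subgraph) : Prop :=
  ∃ (f : W → V) (p : ∀ ⦃u v : W⦄, X.Adj u v → G.Walk (f u) (f v)),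
    Function.Injective f ∧
    (∀ ⦃u v : W⦄ (h : X.Adj u v), (p h).IsPath) ∧
    (∀ ⦃u v : W⦄ (h : X.Adj u v), k + 1 ≤ (p h).length) ∧
    (∀ ⦃u v : W⦄ (h : X.Adj u v), p h.symm = (p h).reverse) ∧
    (∀ ⦃u v : W⦄ (h : X.Adj u v) (w : W), f w ∈ (p h).support → w = u ∨ w = v) ∧
    (∀ ⦃u v u' v' : W⦄ (h : X.Adj u v) (h' : X.Adj u' v'), s(u, v) ≠ s(u', v') →
      ∀ x : V, x ∈ (p h).support → x ∈ (p h').support →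
        (x = f u ∨ x = f v) ∧ (x = f u' ∨ x = f v')) ∧
    Y.verts = Set.range f ∪ {x : V | ∃ (u v : W) (h : X.Adj u v), x ∈ (p h).support} ∧
    Y.edgeSet = {e : Sym2 V | ∃ (u v : W) (h : X.Adj u v), e ∈ (p h).edges}

/-- `G` contains a `(≥ k)`-subdivision of `X` as a `c`-quasi-geodesic subgraph. -/
def ContainsQuasiGeodesicSubdivGE (G : SimpleGraph V) (k : ℕ) (X : SimpleGraph W) (c : ℕ) :
    Prop :=
  ∃ Y : G.Subgraph, IsSubdivGE k X Y ∧ IsQuasiGeodesic G Y c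

/-- `X` is a minor of `Hg`. -/
def IsMinorOf (X : SimpleGraph W) (Hg : SimpleGraph N) : Prop :=
  ∃ B : W → Set N, (∀ w, (B w).Nonempty) ∧ (∀ w, (Hg.induce (B w)).Connected) ∧
    (∀ ⦃w w' : W⦄, w ≠ w' → Disjoint (B w) (B w')) ∧
    (∀ ⦃w w' : W⦄, X.Adj w w' → ∃ a ∈ B w, ∃ b ∈ B w', Hg.Adj a b)

/-- A class of (finite) graphs, given on the canonical vertex sets `Fin n`, is minor-closed. -/
def MinorClosed (ℋ : ∀ n : ℕ, SimpleGraph (Fin n) → Prop) : Prop :=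
  ∀ ⦃m n : ℕ⦄ (X : SimpleGraph (Fin m)) (Hg : SimpleGraph (Fin n)),
    ℋ n Hg → IsMinorOf X Hg → ℋ m X

/-- The triangle `K³`. -/
def triangleGraph : SimpleGraph (Fin 3) := ⊤

/-- The claw `K_{1,3}`, with centre `0`. -/
def clawGraph : SimpleGraph (Fin 4) := SimpleGraph.fromRel (fun a _ => a = 0)

/-- The wrench graph: two adjacent vertices `0, 1` of degree three, with leaves `2,3` and
`4,5` respectively. -/
def wrenchGraph : SimpleGraph (Fin 6) :=
  SimpleGraph.fromRel (fun a b =>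
    (a = 0 ∧ b = 1) ∨ (a = 0 ∧ b = 2) ∨ (a = 0 ∧ b = 3) ∨ (a = 1 ∧ b = 4) ∨ (a = 1 ∧ b = 5))

/-- The star `K_{1,m}`, with centre `none`. -/
def starGraph (m : ℕ) : SimpleGraph (Option (Fin m)) :=
  SimpleGraph.fromRel (fun a _ => a = none)

/-- `Hg` is a disjoint union of paths: every connected component is a path. -/
def IsUnionOfPaths (Hg : SimpleGraph N) : Prop :=
  ∀ cc : Hg.ConnectedComponent, ∃ m : ℕ,
    Nonempty (Hg.induce cc.supp ≃g SimpleGraph.pathGraph m)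

/-- `Hg` is a disjoint union of cycles: every connected component is a cycle. -/
def IsUnionOfCycles (Hg : SimpleGraph N) : Prop :=
  ∀ cc : Hg.ConnectedComponent, ∃ m : ℕ, 3 ≤ m ∧
    Nonempty (Hg.induce cc.supp ≃g SimpleGraph.cycleGraph m)

/-- `Hg` is a subdivided star, i.e. a `(≥ 0)`-subdivision of some star `K_{1,m}`. -/
def IsSubdividedStar (Hg : SimpleGraph N) : Prop :=
  ∃ m : ℕ, IsSubdivGE 0 (starGraph m) (⊤ : Hg.Subgraph)

/-- `Hg` is a disjoint union of subdivided stars. -/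
def IsUnionOfSubdividedStars (Hg : SimpleGraph N) : Prop :=
  ∀ cc : Hg.ConnectedComponent, IsSubdividedStar (Hg.induce cc.supp)

/-- A graph-decomposition is honest: bags of adjacent nodes intersect. -/
def Honest (Hg : SimpleGraph N) (B : N → Set V) : Prop :=
  ∀ ⦃h h' : N⦄, Hg.Adj h h' → (B h ∩ B h').Nonempty

/-- The outer-radial width of a decomposition of `G` is at most `r`. -/
def OuterRadialWidthLE (G : SimpleGraph V) (B : N → Set V) (r : ℕ) : Prop :=
  ∀ h : N, ∃ z : V, ∀ v ∈ B h, G.edist z v ≤ (r : ℕ∞)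

/-- The radial spread of a decomposition `(Hg, B)` of a graph with vertex set `V`
is at most `r`. -/
def RadialSpreadLE (Hg : SimpleGraph N) (B : N → Set V) (r : ℕ) : Prop :=
  ∀ v : V, radiusLE (Hg.induce {h : N | v ∈ B h}) r

/-- `φ` is an `(m, a, M, A, r)`-quasi-isometry from `Hg` to `G`. -/
def IsQuasiIsometry (Hg : SimpleGraph N) (G : SimpleGraph V) (m a M A r : ℕ)
    (φ : N → V) : Prop :=
  (∀ h h' : N, Hg.edist h h' ≤ (m : ℕ∞) * G.edist (φ h) (φ h') + (a : ℕ∞)) ∧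
  (∀ h h' : N, G.edist (φ h) (φ h') ≤ (M : ℕ∞) * Hg.edist h h' + (A : ℕ∞)) ∧
  (∀ v : V, ∃ h : N, G.edist v (φ h) ≤ (r : ℕ∞))

/-- `C` is a connected component of `G - S`: a maximal connected set of vertices
disjoint from `S`. -/
def IsCompOf (G : SimpleGraph V) (C S : Set V) : Prop :=
  C.Nonempty ∧ Disjoint C S ∧ (G.induce C).Connected ∧
  ∀ D : Set V, C ⊆ D → Disjoint D S → (G.induce D).Connected → D = C

/-- The subgraph `P` of `G` is an `M₀`–`M₁` path meeting `C`. -/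
def IsM01Path (G : SimpleGraph V) (M₀ M₁ C : Set V) (P : G.Subgraph) : Prop :=
  ∃ (x y : V) (q : G.Walk x y), q.IsPath ∧ q.toSubgraph = P ∧ x ∈ M₀ ∧ y ∈ M₁ ∧
    (∀ z ∈ q.support, z ≠ x → z ≠ y → z ∉ M₀ ∪ M₁) ∧ ∃ z ∈ q.support, z ∈ C

/-- The number of `M₀`–`M₁` paths meeting `C` that are contained in the subgraph `OS`. -/
noncomputable def Wcount (G : SimpleGraph V) (M₀ M₁ C : Set V) (OS : G.Subgraph) : ℕ :=
  Set.ncard {P : G.Subgraph | P ≤ OS ∧ IsM01Path G M₀ M₁ C P}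


/-- A walk inside `S` bounds the distance in the induced subgraph. -/
theorem induce_edist_le_aux {V : Type*} {G : SimpleGraph V} {S : Set V} {a b : V}
    (p : G.Walk a b) (hp : ∀ x ∈ p.support, x ∈ S) (ha : a ∈ S) (hb : b ∈ S) :
    (G.induce S).edist ⟨a, ha⟩ ⟨b, hb⟩ ≤ (p.length : ℕ∞) := by
  induction p with
  | nil => simp
  | @cons a c b h q ih =>
    have hc : c ∈ S := hp c (by simp)
    have h1 := ih (fun x hx => hp x (by simp [hx])) hc hb
    have h2 : (G.induce S).edist ⟨a, ha⟩ ⟨c, hc⟩ ≤ 1 :=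
      (SimpleGraph.edist_eq_one_iff_adj.2 (by simpa using h)).le
    refine SimpleGraph.edist_triangle.trans ((add_le_add h2 h1).trans ?_)
    rw [SimpleGraph.Walk.length_cons]
    push_cast
    rw [add_comm]

theorem exists_walk_le_aux {V : Type*} {G : SimpleGraph V} {a b : V} {n : ℕ}
    (h : G.edist a b ≤ (n : ℕ∞)) : ∃ p : G.Walk a b, p.length ≤ n := by
  obtain ⟨p, hp⟩ := SimpleGraph.exists_walk_of_edist_ne_top
    (ne_top_of_le_ne_top (ENat.coe_ne_top n) h)
  exact ⟨p, by rw [← hp] at h; exact_mod_cast h⟩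

theorem walk_split_aux {V : Type*} {G : SimpleGraph V} {a b x : V} (p : G.Walk a b)
    (hx : x ∈ p.support) : ∃ (q : G.Walk a x) (r : G.Walk x b), q.length + r.length = p.length := by
  obtain ⟨q, r, h⟩ := SimpleGraph.Walk.mem_support_iff_exists_append.1 hx
  exact ⟨q, r, by rw [h, SimpleGraph.Walk.length_append]⟩

theorem center_aux {V : Type*} (G : SimpleGraph V) (U : Set V) (u : V) (hu : u ∈ U) (k : ℕ)
    (hdist : ∀ u' ∈ U, G.edist u u' ≤ ((2 * k : ℕ) : ℕ∞)) (hb : u ∈ ballSet G U k)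
    (w : ballSet G U k) :
    (G.induce (ballSet G U k)).edist ⟨u, hb⟩ w ≤ ((3 * k : ℕ) : ℕ∞) := by
  obtain ⟨v, hv⟩ := w
  obtain ⟨u', hu', hd⟩ := id hv
  have hb' : u' ∈ ballSet G U k := ⟨u', hu', by simp⟩
  obtain ⟨p, hp⟩ := exists_walk_le_aux (hdist u' hu')
  obtain ⟨q, hq⟩ := exists_walk_le_aux hd
  have h1 := induce_edist_le_aux p (S := ballSet G U k) (fun x hx => by
    obtain ⟨r, s, hrs⟩ := walk_split_aux p hx
    rcases le_or_gt r.length k with h | h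
    · exact ⟨u, hu, (SimpleGraph.edist_le r).trans (by exact_mod_cast h)⟩
    · refine ⟨u', hu', ?_⟩
      rw [SimpleGraph.edist_comm]
      refine (SimpleGraph.edist_le s).trans ?_
      have : s.length ≤ k := by omega
      exact_mod_cast this) hb hb'
  have h2 := induce_edist_le_aux q (S := ballSet G U k) (fun x hx => by
    obtain ⟨r, s, hrs⟩ := walk_split_aux q hx
    refine ⟨u', hu', (SimpleGraph.edist_le r).trans ?_⟩
    have : r.length ≤ k := by omega
    exact_mod_cast this) hb' hv
  refine SimpleGraph.edist_triangle.trans ((add_le_add h1 h2).trans ?_)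
  have : p.length + q.length ≤ 3 * k := by omega
  exact_mod_cast this

/-- Let `U` be a set of vertices of a graph `G`, and suppose there are
`u ∈ U` and `k : ℕ` with `dist_G(u, u') ≤ 2k` for all `u' ∈ U`. Then `G[B_G(U, k)]` has
radius at most `3k`; in particular it is connected. -/
theorem radius_of_ball_around_set
    {V : Type*} [Fintype V] (G : SimpleGraph V) (U : Set V) (u : V) (hu : u ∈ U) (k : ℕ)
    (hdist : ∀ u' ∈ U, G.edist u u' ≤ ((2 * k : ℕ) : ℕ∞)) :
    radiusLE (G.induce (ballSet G U k)) (3 * k) ∧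
      (G.induce (ballSet G U k)).Connected := by
  have hb : u ∈ ballSet G U k := ⟨u, hu, by simp⟩
  have key := center_aux G U u hu k hdist hb
  have hr : ∀ w, (G.induce (ballSet G U k)).Reachable ⟨u, hb⟩ w := fun w =>
    SimpleGraph.reachable_of_edist_ne_top (ne_top_of_le_ne_top (ENat.coe_ne_top _) (key w))
  refine ⟨fun _ => ⟨⟨u, hb⟩, key⟩, ?_⟩
  haveI : Nonempty (ballSet G U k) := ⟨⟨u, hb⟩⟩
  exact SimpleGraph.Connected.mk fun a b => (hr a).symm.trans (hr b)

end RadialPaper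
end

section
/- Let (H,(V_h)_{h ∈ V(H)}) be a graph-decomposition of a graph G. Then for every connected subgraph X of G, the subgraph of H induced on the set {h ∈ V(H) : V(X) ∩ V_h ≠ ∅} is connected. -/
open SimpleGraph

namespace RadialPaper

variable {V W N : Type*}

/-- Let `(Hg, B)` be a graph-decomposition of `G`. Then for every
connected subgraph `X` of `G`, the subgraph of `Hg` induced on the nodes whose bags meet
`X` is connected. -/
theorem induced_on_bags_meeting_connected_subgraph_connected
    {V N : Type*} [Fintype V] [Fintype N] (G : SimpleGraph V) (Hg : SimpleGraph N)
    (B : N → Set V) (hdec : IsGraphDecomp G Hg B)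
    (X : G.Subgraph) (hX : X.coe.Connected) :
    (Hg.induce {h : N | ∃ v ∈ X.verts, v ∈ B h}).Connected := by
  obtain ⟨h1, h2, h3⟩ := hdec
  have key : ∀ v (hv : v ∈ X.verts) a b (ha : v ∈ B a) (hb : v ∈ B b),
      (Hg.induce {h : N | ∃ v ∈ X.verts, v ∈ B h}).Reachable ⟨a, v, hv, ha⟩ ⟨b, v, hv, hb⟩ := by
    intro v hv a b ha hb
    have hs : {h : N | v ∈ B h} ⊆ {h : N | ∃ v ∈ X.verts, v ∈ B h} := fun h hh => ⟨v, hv, hh⟩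
    exact ((h3 v).preconnected ⟨a, ha⟩ ⟨b, hb⟩).map (SimpleGraph.induceHomOfLE Hg hs).toHom
  have walk : ∀ (u w : X.verts), X.coe.Walk u w → ∀ a b (ha : (u : V) ∈ B a) (hb : (w : V) ∈ B b),
      (Hg.induce {h : N | ∃ v ∈ X.verts, v ∈ B h}).Reachable
        ⟨a, u, u.2, ha⟩ ⟨b, w, w.2, hb⟩ := by
    intro u w p
    induction p with
    | nil => intro a b ha hb; exact key _ (Subtype.property _) a b ha hb
    | @cons u v w hadj p ih =>
      intro a b ha hb
      obtain ⟨c, hc1, hc2⟩ := h2 (X.coe_adj_sub _ _ hadj)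
      exact (key _ u.2 a c ha hc1).trans (ih c b hc2 hb)
  obtain ⟨x⟩ := hX.nonempty
  obtain ⟨h, hh⟩ := h1 x
  have : Nonempty {h : N | ∃ v ∈ X.verts, v ∈ B h} := ⟨⟨h, x, x.2, hh⟩⟩
  refine ⟨?_⟩
  rintro ⟨a, u, hu, ha⟩ ⟨b, w, hw, hb⟩
  obtain ⟨p⟩ := hX.preconnected ⟨u, hu⟩ ⟨w, hw⟩
  exact walk _ _ p a b ha hb

end RadialPaper
end

section
/- Let (H,(V_h)_{h ∈ V(H)}) be a graph-decomposition of a graph G, and let r ∈ ℕ. Define V'_h := B_G(V_h, r) for every h ∈ V(H). Then (H,(V'_h)_{h ∈ V(H)}) is again a graph-decomposition of G. -/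
open SimpleGraph

namespace RadialPaper

variable {V W N : Type*}

theorem reach_aux {V N : Type*} (G : SimpleGraph V) (Hg : SimpleGraph N)
    (B : N → Set V) (hdec : IsGraphDecomp G Hg B) (S : Set N) (u v : V) (p : G.Walk u v) :
    (∀ w, G.edist w v ≤ (p.length : ℕ∞) → {h | w ∈ B h} ⊆ S) →
    ∀ (a b : S), u ∈ B a → v ∈ B b → (Hg.induce S).Reachable a b := by
  have key : ∀ w, {h | w ∈ B h} ⊆ S → ∀ (a b : S), w ∈ B a → w ∈ B b →
      (Hg.induce S).Reachable a b := by
    intro w hw a b ha hb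
    exact ((hdec.2.2 w).preconnected ⟨a, ha⟩ ⟨b, hb⟩).map (Hg.induceHomOfLE hw).toHom
  induction p with
  | nil =>
    intro hS a b ha hb
    exact key _ (hS _ (by simp)) a b ha hb
  | @cons u w v e p ih =>
    intro hS a b ha hb
    obtain ⟨h, hu, hw⟩ := hdec.2.1 e
    have hu' : {h | u ∈ B h} ⊆ S := hS u (SimpleGraph.Walk.edist_le (Walk.cons e p))
    refine (key u hu' a ⟨h, hu' hu⟩ ha hu).trans (ih ?_ ⟨h, hu' hu⟩ b hw hb)
    intro x hx
    exact hS x (hx.trans (by simp))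

/-- Let `(Hg, B)` be a graph-decomposition of `G` and `r : ℕ`. Replacing
every bag `B h` by the ball `B_G(B h, r)` again yields a graph-decomposition of `G`. -/
theorem decomposition_of_balls_around_bags
    {V N : Type*} [Fintype V] [Fintype N] (G : SimpleGraph V) (Hg : SimpleGraph N)
    (B : N → Set V) (hdec : IsGraphDecomp G Hg B) (r : ℕ) :
    IsGraphDecomp G Hg (fun h => ballSet G (B h) r) := by
  have hsub : ∀ h, B h ⊆ ballSet G (B h) r := fun h v hv => ⟨v, hv, by simp⟩
  refine ⟨fun v => ?_, fun u v e => ?_, fun v => ?_⟩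
  · obtain ⟨h, hv⟩ := hdec.1 v
    exact ⟨h, hsub h hv⟩
  · obtain ⟨h, hu, hv⟩ := hdec.2.1 e
    exact ⟨h, hsub h hu, hsub h hv⟩
  · obtain ⟨h0, hv⟩ := hdec.1 v
    have hr : ∀ a : {h : N | v ∈ ballSet G (B h) r},
        (Hg.induce {h : N | v ∈ ballSet G (B h) r}).Reachable a ⟨h0, hsub h0 hv⟩ := by
      rintro ⟨a, u, hu, hd⟩
      have hne : G.edist u v ≠ ⊤ := ne_top_of_le_ne_top (ENat.coe_ne_top r) hd
      obtain ⟨p, hp⟩ := SimpleGraph.exists_walk_of_edist_ne_top hne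
      refine reach_aux G Hg B hdec _ u v p ?_ _ _ hu hv
      intro w hw h hh
      exact ⟨w, hh, hw.trans (hp.le.trans hd)⟩
    exact (SimpleGraph.connected_iff _).2
      ⟨fun a b => (hr a).trans (hr b).symm, ⟨⟨h0, hsub h0 hv⟩⟩⟩

end RadialPaper
end

section
/- Let (H,(V_h)_{h ∈ V(H)}) be a graph-decomposition of a graph G, and suppose that H is a minor of a graph H'. Then G has an H'-decomposition whose radial width equals the radial width of (H,(V_h)). -/
open SimpleGraph

namespace RadialPaper

variable {V W N : Type*}

/-- Let `(Hg, B)` be a graph-decomposition of `G`, and suppose `Hg` is a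
minor of `Hg'`. Then `G` has an `Hg'`-decomposition whose radial width equals the radial
width of `(Hg, B)` (equality of the two widths in `ℕ∞` is expressed by their having the
same natural upper bounds). -/
theorem decomposition_modelled_on_minor_host
    {V N N' : Type*} [Fintype V] [Fintype N] [Fintype N'] (G : SimpleGraph V)
    (Hg : SimpleGraph N) (Hg' : SimpleGraph N') (B : N → Set V)
    (hdec : IsGraphDecomp G Hg B) (hminor : IsMinorOf Hg Hg') :
    ∃ B' : N' → Set V, IsGraphDecomp G Hg' B' ∧
      ∀ r : ℕ, ((∀ h', radiusLE (G.induce (B' h')) r) ↔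
        (∀ h, radiusLE (G.induce (B h)) r)) := by
  obtain ⟨hv, he, hc⟩ := hdec
  obtain ⟨M, hne, hconn, hdisj, hadj⟩ := hminor
  have huniq : ∀ {h k : N} {n : N'}, n ∈ M h → n ∈ M k → h = k := by
    intro h k n h1 h2
    by_contra hk
    exact Set.disjoint_left.mp (hdisj hk) h1 h2
  let B' : N' → Set V := fun n => {v | ∃ h, n ∈ M h ∧ v ∈ B h}
  have hB : ∀ {h : N} {n : N'}, n ∈ M h → B' n = B h := by
    intro h n hn
    ext v
    constructor
    · rintro ⟨k, hk, hvk⟩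
      rw [huniq hn hk]
      exact hvk
    · intro hvh
      exact ⟨h, hn, hvh⟩
  refine ⟨B', ⟨?_, ?_, ?_⟩, ?_⟩
  · intro v
    obtain ⟨h, hh⟩ := hv v
    obtain ⟨n, hn⟩ := hne h
    exact ⟨n, h, hn, hh⟩
  · intro u v huv
    obtain ⟨h, hu, hv⟩ := he huv
    obtain ⟨n, hn⟩ := hne h
    exact ⟨n, ⟨h, hn, hu⟩, ⟨h, hn, hv⟩⟩
  · intro v
    have hin : ∀ (h : N) (hvh : v ∈ B h) (a b : N') (ha : a ∈ M h) (hb : b ∈ M h),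
        (Hg'.induce {n : N' | v ∈ B' n}).Reachable ⟨a, h, ha, hvh⟩ ⟨b, h, hb, hvh⟩ := by
      intro h hvh a b ha hb
      have hle : M h ≤ {n : N' | v ∈ B' n} := fun n hn => ⟨h, hn, hvh⟩
      exact ((hconn h).preconnected ⟨a, ha⟩ ⟨b, hb⟩).map
        (SimpleGraph.induceHomOfLE Hg' hle).toHom
    have key : ∀ (x y : {h : N | v ∈ B h}) (_ : (Hg.induce {h : N | v ∈ B h}).Walk x y)
        (a b : N') (ha : a ∈ M x.1) (hb : b ∈ M y.1),
        (Hg'.induce {n : N' | v ∈ B' n}).Reachable ⟨a, x.1, ha, x.2⟩ ⟨b, y.1, hb, y.2⟩ := by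
      intro x y w
      induction w with
      | @nil z => intro a b ha hb; exact hin z.1 z.2 a b ha hb
      | @cons x z y hxz w ih =>
        intro a b ha hb
        obtain ⟨c, hc', d, hd, hcd⟩ := hadj (show Hg.Adj x.1 z.1 from hxz)
        refine (hin x.1 x.2 a c ha hc').trans (SimpleGraph.Reachable.trans ?_ (ih d b hd hb))
        exact SimpleGraph.Adj.reachable
          (show (Hg'.induce {n : N' | v ∈ B' n}).Adj ⟨c, x.1, hc', x.2⟩ ⟨d, z.1, hd, z.2⟩ from hcd)
    obtain ⟨h, hh⟩ := hv v
    obtain ⟨n, hn⟩ := hne h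
    haveI : Nonempty {n : N' | v ∈ B' n} := ⟨⟨n, h, hn, hh⟩⟩
    refine SimpleGraph.Connected.mk ?_
    rintro ⟨a, x, ha, hx⟩ ⟨b, y, hb, hy⟩
    obtain ⟨w⟩ := (hc v).preconnected ⟨x, hx⟩ ⟨y, hy⟩
    exact key _ _ w a b ha hb
  · intro r
    constructor
    · intro H h
      obtain ⟨n, hn⟩ := hne h
      have := H n
      rwa [hB hn] at this
    · intro H n
      by_cases hn : ∃ h, n ∈ M h
      · obtain ⟨h, hn⟩ := hn
        rw [hB hn]
        exact H h
      · rintro ⟨⟨v, h, hh, _⟩⟩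
        exact absurd ⟨h, hh⟩ hn

end RadialPaper
end

section
/- Let 𝓗 be a minor-closed class of graphs and let X ∉ 𝓗 be a graph. Then for every k ∈ ℕ, every (≥k)-subdivision of X has radial 𝓗-width at least k/4. -/
open SimpleGraph

namespace RadialPaper

variable {V W N : Type*}

section Helpers

lemma reach_mono {G : SimpleGraph V} {s t : Set V} (hst : s ⊆ t) {u v : V} {hu : u ∈ s} {hv : v ∈ s}
    (h : (G.induce s).Reachable ⟨u, hu⟩ ⟨v, hv⟩) :
    (G.induce t).Reachable ⟨u, hst hu⟩ ⟨v, hst hv⟩ :=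
  h.map (induceHomOfLE _ hst).toHom

lemma exists_cross {Hg : SimpleGraph N} {S U C : Set N}
    (hC : ∀ c ∈ C, ∀ d ∈ S, Hg.Adj c d → d ∉ U → d ∈ C)
    {a b : S} (q : (Hg.induce S).Walk a b) (ha : (a : N) ∈ C) (hb : (b : N) ∈ U)
    (hdis : ∀ c ∈ C, c ∉ U) :
    ∃ c ∈ C, ∃ d ∈ U, Hg.Adj c d := by
  induction q with
  | nil => exact absurd hb (hdis _ ha)
  | @cons u v w h q ih =>
    have hadj : Hg.Adj (u : N) (v : N) := h
    by_cases hv : (v : N) ∈ U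
    · exact ⟨u, ha, v, hv, hadj⟩
    · exact ih (hC _ ha _ v.2 hadj hv) hb

lemma minor_of_models {m : ℕ} (X : SimpleGraph (Fin m)) (Hg : SimpleGraph N)
    (U : Fin m → Set N) (S : Fin m → Fin m → Set N)
    (hU : ∀ x, (Hg.induce (U x)).Connected)
    (hUd : ∀ x y, x ≠ y → ∀ h, h ∈ U x → h ∉ U y)
    (hS : ∀ x y, X.Adj x y → (Hg.induce (S x y)).Connected)
    (hSx : ∀ x y, X.Adj x y → ∃ h, h ∈ S x y ∧ h ∈ U x)
    (hSy : ∀ x y, X.Adj x y → ∃ h, h ∈ S x y ∧ h ∈ U y)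
    (hSd : ∀ x y x' y', X.Adj x y → X.Adj x' y' → s(x, y) ≠ s(x', y') →
      ∀ h, h ∈ S x y → h ∉ S x' y')
    (hSU : ∀ x y w, X.Adj x y → w ≠ x → w ≠ y → ∀ h, h ∈ S x y → h ∉ U w) :
    IsMinorOf X Hg := by
  let C : Fin m → Fin m → Set N := fun x y => {c | ∃ a ∈ U x, ∃ q : Hg.Walk a c,
    ∀ t ∈ q.support, t ∈ S x y ∧ t ∉ U y}
  have hCS : ∀ x y c, c ∈ C x y → c ∈ S x y ∧ c ∉ U y := by
    rintro x y c ⟨a, ha, q, hq⟩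
    exact hq c q.end_mem_support
  let T : Fin m → Set N := fun x => U x ∪ {c | ∃ y, x < y ∧ X.Adj x y ∧ c ∈ C x y}
  have hTne : ∀ x, ∃ a, a ∈ U x := fun x => by
    obtain ⟨a⟩ := (hU x).nonempty
    exact ⟨a, a.2⟩
  refine ⟨T, fun x => ?_, fun x => ?_, ?_, ?_⟩
  · obtain ⟨a, ha⟩ := hTne x
    exact ⟨a, Or.inl ha⟩
  · obtain ⟨a, ha⟩ := hTne x
    apply induce_connected_of_patches a (Or.inl ha)
    rintro v (hv | ⟨y, hxy, hadj, b, hb, q, hq⟩)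
    · exact ⟨U x, Set.subset_union_left, ha, hv, (hU x).preconnected _ _⟩
    · refine ⟨U x ∪ {t | t ∈ q.support}, ?_, Or.inl ha, Or.inr q.end_mem_support, ?_⟩
      · apply Set.union_subset Set.subset_union_left
        intro t ht
        refine Or.inr ⟨y, hxy, hadj, b, hb, ?_⟩
        classical
        exact ⟨q.takeUntil t ht, fun s hs => hq s (q.support_takeUntil_subset_support ht hs)⟩
      · exact (induce_union_connected (hU x).preconnected q.connected_induce_support.preconnected
          ⟨b, hb, q.start_mem_support⟩).preconnected _ _
  · intro w w' hww
    rw [Set.disjoint_left]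
    rintro h (h1 | ⟨y, hy, hadj, hc⟩) (h2 | ⟨y', hy', hadj', hc'⟩)
    · exact hUd _ _ hww _ h1 h2
    · obtain ⟨hs, hu⟩ := hCS _ _ _ hc'
      by_cases e : w = y'
      · subst e; exact hu h1
      · exact hSU _ _ w hadj' hww e _ hs h1
    · obtain ⟨hs, hu⟩ := hCS _ _ _ hc
      by_cases e : w' = y
      · subst e; exact hu h2
      · exact hSU _ _ w' hadj hww.symm e _ hs h2
    · refine hSd _ _ _ _ hadj hadj' ?_ _ (hCS _ _ _ hc).1 (hCS _ _ _ hc').1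
      intro e
      rw [Sym2.eq_iff] at e
      rcases e with ⟨e, -⟩ | ⟨e1, e2⟩
      · exact hww e
      · subst e1 e2
        exact lt_asymm hy hy'
  · have key : ∀ x y, x < y → X.Adj x y → ∃ a ∈ T x, ∃ b ∈ T y, Hg.Adj a b := by
      intro x y hxy hadj
      obtain ⟨a, haS, haU⟩ := hSx x y hadj
      obtain ⟨b, hbS, hbU⟩ := hSy x y hadj
      obtain ⟨q⟩ := (hS x y hadj).preconnected ⟨a, haS⟩ ⟨b, hbS⟩
      obtain ⟨c, hc, d, hd, hcd⟩ := exists_cross (C := C x y) (U := U y) (by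
        rintro c ⟨a', ha', q', hq'⟩ d hdS hcd hdU
        refine ⟨a', ha', q'.concat hcd, ?_⟩
        intro t ht
        rw [Walk.support_concat] at ht
        simp only [List.mem_append, List.mem_singleton] at ht
        rcases ht with ht | rfl
        · exact hq' t ht
        · exact ⟨hdS, hdU⟩) q
        ⟨a, haU, Walk.nil, by
          intro t ht
          simp only [Walk.support_nil, List.mem_singleton] at ht
          subst ht
          exact ⟨haS, hUd _ _ hxy.ne _ haU⟩⟩ hbU (fun c hc => (hCS _ _ _ hc).2)
      exact ⟨c, Or.inr ⟨y, hxy, hadj, hc⟩, d, Or.inl hd, hcd⟩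
    intro w w' hadj
    rcases lt_or_gt_of_ne hadj.ne with h | h
    · exact key _ _ h hadj
    · obtain ⟨a, ha, b, hb, hab⟩ := key _ _ h hadj.symm
      exact ⟨b, hb, a, ha, hab.symm⟩

lemma nodes_reach {G : SimpleGraph V} {Hg : SimpleGraph N} {B : N → Set V}
    (hB : IsGraphDecomp G Hg B) (A : Set V) {a b : A} (q : (G.induce A).Walk a b) :
    ∀ (h h' : N) (ha : (a : V) ∈ B h) (hb : (b : V) ∈ B h'),
    (Hg.induce {h | ∃ v ∈ A, v ∈ B h}).Reachable ⟨h, a, a.2, ha⟩ ⟨h', b, b.2, hb⟩ := by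
  have base : ∀ (a : A) (h h' : N) (ha : (a : V) ∈ B h) (hb : (a : V) ∈ B h'),
      (Hg.induce {h | ∃ v ∈ A, v ∈ B h}).Reachable ⟨h, a, a.2, ha⟩ ⟨h', a, a.2, hb⟩ := by
    intro a h h' ha hb
    have := (hB.2.2 (a : V)).preconnected ⟨h, ha⟩ ⟨h', hb⟩
    exact reach_mono (t := {h | ∃ v ∈ A, v ∈ B h}) (fun h hh => ⟨a, a.2, hh⟩) this
  induction q with
  | nil => intro h h' ha hb; exact base _ _ _ ha hb
  | @cons u v w e q ih =>
    intro h h' ha hb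
    obtain ⟨h'', h1, h2⟩ := hB.2.1 (show G.Adj (u : V) v from e)
    exact (base u h h'' ha h1).trans (ih h'' h' h2 hb)

lemma nodes_connected {G : SimpleGraph V} {Hg : SimpleGraph N} {B : N → Set V}
    (hB : IsGraphDecomp G Hg B) (A : Set V) (hA : (G.induce A).Connected) :
    (Hg.induce {h | ∃ v ∈ A, v ∈ B h}).Connected := by
  obtain ⟨a⟩ := hA.nonempty
  obtain ⟨h, hh⟩ := hB.1 (a : V)
  rw [connected_iff_exists_forall_reachable]
  refine ⟨⟨h, a, a.2, hh⟩, ?_⟩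
  rintro ⟨h', v, hv, hv'⟩
  obtain ⟨q⟩ := hA.preconnected a ⟨v, hv⟩
  exact nodes_reach hB A q h h' hh hv'

lemma seg_reach {G : SimpleGraph V} {u v : V} (p : G.Walk u v) (A : Set V) (i : ℕ) (d : ℕ)
    (hd : i + d ≤ p.length) (hA : ∀ t, i ≤ t → t ≤ i + d → p.getVert t ∈ A) :
    (G.induce A).Reachable ⟨p.getVert i, hA i le_rfl (by omega)⟩
      ⟨p.getVert (i + d), hA (i + d) (by omega) le_rfl⟩ := by
  induction d with
  | zero => exact Reachable.refl _
  | succ d ih =>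
    refine (ih (by omega) (fun t h1 h2 => hA t h1 (by omega))).trans ?_
    apply Adj.reachable
    exact p.adj_getVert_succ (by omega)

lemma lip_dist {G : SimpleGraph V} (φ : V → ℕ) (hφ : ∀ u v, G.Adj u v → φ u ≤ φ v + 1)
    (A : Set V) {a b : A} {r : ℕ} (h : (G.induce A).edist a b ≤ r) :
    φ a ≤ φ b + r ∧ φ b ≤ φ a + r := by
  have key : ∀ {a b : A} (q : (G.induce A).Walk a b),
      φ a ≤ φ b + q.length ∧ φ b ≤ φ a + q.length := by
    intro a b q
    induction q with
    | nil => simp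
    | @cons u v w e q ih =>
      have e' : G.Adj (u : V) v := e
      have h1 := hφ _ _ e'
      have h2 := hφ _ _ e'.symm
      rw [Walk.length_cons]
      omega
  have hne : (G.induce A).edist a b ≠ ⊤ := fun e => by simp [e] at h
  obtain ⟨q, hq⟩ := exists_walk_of_edist_ne_top hne
  have := key q
  rw [← hq] at h
  have h' : q.length ≤ r := by exact_mod_cast h
  omega

lemma exists_D {K : ℕ} {X : SimpleGraph W} {G : SimpleGraph V}
    (f : W → V) (p : ∀ ⦃u v : W⦄, X.Adj u v → G.Walk (f u) (f v))
    (hf : Function.Injective f)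
    (hpath : ∀ ⦃u v : W⦄ (h : X.Adj u v), (p h).IsPath)
    (hlen : ∀ ⦃u v : W⦄ (h : X.Adj u v), K ≤ (p h).length)
    (hint : ∀ ⦃u v : W⦄ (h : X.Adj u v) (w : W), f w ∈ (p h).support → w = u ∨ w = v)
    (hdis : ∀ ⦃u v u' v' : W⦄ (h : X.Adj u v) (h' : X.Adj u' v'), s(u, v) ≠ s(u', v') →
      ∀ x : V, x ∈ (p h).support → x ∈ (p h').support →
        (x = f u ∨ x = f v) ∧ (x = f u' ∨ x = f v')) :
    ∃ D : W → V → ℕ, (∀ x, D x (f x) = 0) ∧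
      (∀ x y (h : X.Adj x y) i, i ≤ (p h).length → D x ((p h).getVert i) = min i K) ∧
      (∀ x y (h : X.Adj x y) w, w ≠ x → w ≠ y → ∀ v ∈ (p h).support, D w v = K) ∧
      (∀ x w, w ≠ x → D w (f x) = K) := by
  let Z : W → V → Set ℕ := fun x v => {i | i = K ∨ (v = f x ∧ i = 0) ∨
    ∃ y, ∃ h : X.Adj x y, i ≤ (p h).length ∧ (p h).getVert i = v}
  have hmem : ∀ x v, sInf (Z x v) ∈ Z x v := fun x v => Nat.sInf_mem ⟨K, Or.inl rfl⟩
  have hle : ∀ x v i, i ∈ Z x v → sInf (Z x v) ≤ i := fun x v i hi => Nat.sInf_le hi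
  have hlast : ∀ x y (h : X.Adj x y) i, i ≤ (p h).length → (p h).getVert i = f y →
      i = (p h).length := by
    intro x y h i hi e
    exact (hpath h).getVert_injOn hi (le_refl (p h).length) (by rw [e, Walk.getVert_length])
  have hfirst : ∀ x y (h : X.Adj x y) i, i ≤ (p h).length → (p h).getVert i = f x →
      i = 0 := by
    intro x y h i hi e
    exact (hpath h).getVert_injOn hi (Nat.zero_le (p h).length) (by rw [e, Walk.getVert_zero])
  refine ⟨fun x v => sInf (Z x v), fun x => ?_, ?_, ?_, ?_⟩
  · have := hle x (f x) 0 (Or.inr (Or.inl ⟨rfl, rfl⟩))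
    simpa using this
  · intro x y h i hi
    show sInf (Z x ((p h).getVert i)) = min i K
    have h1 := hle x ((p h).getVert i) i (Or.inr (Or.inr ⟨y, h, hi, rfl⟩))
    have h2 := hle x ((p h).getVert i) K (Or.inl rfl)
    apply le_antisymm (le_min h1 h2)
    rcases hmem x ((p h).getVert i) with e | ⟨e, e'⟩ | ⟨y', h', hi', e⟩
    · omega
    · have := hfirst x y h i hi e
      omega
    · by_cases hy : y' = y
      · subst hy
        have := (hpath h).getVert_injOn hi' hi e
        omega
      · have hne : s(x, y) ≠ s(x, y') := by
          intro e
          rw [Sym2.eq_iff] at e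
          rcases e with ⟨-, e⟩ | ⟨e1, e2⟩
          · exact hy e.symm
          · exact hy (e1 ▸ e2.symm)
        have hm : (p h).getVert i ∈ (p h).support := Walk.getVert_mem_support _ _
        have hm' : (p h).getVert i ∈ (p h').support := by
          rw [← e]; exact Walk.getVert_mem_support _ _
        obtain ⟨a, b⟩ := hdis h h' hne _ hm hm'
        have : (p h).getVert i = f x := by
          rcases a with a | a
          · exact a
          · rcases b with b | b
            · exact b
            · exact absurd (hf (b.symm.trans a)) hy
        have := hfirst x y h i hi this
        omega
  · intro x y h w hwx hwy v hv
    show sInf (Z w v) = K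
    apply le_antisymm (hle w v K (Or.inl rfl))
    rcases hmem w v with e | ⟨e, e'⟩ | ⟨y', h', hi', e⟩
    · omega
    · subst e
      rcases hint h w hv with e | e
      · exact absurd e hwx
      · exact absurd e hwy
    · have hne : s(x, y) ≠ s(w, y') := by
        intro e
        rw [Sym2.eq_iff] at e
        rcases e with ⟨e, -⟩ | ⟨-, e⟩
        · exact hwx e.symm
        · exact hwy e.symm
      have hm' : v ∈ (p h').support :=
        Set.mem_of_eq_of_mem (s := {t | t ∈ (p h').support}) e.symm (Walk.getVert_mem_support _ _)
      obtain ⟨a, b⟩ := hdis h h' hne _ hv hm'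
      rcases b with b | b
      · subst b
        rcases hint h w hv with e | e
        · exact absurd e hwx
        · exact absurd e hwy
      · have := hlast w y' h' _ hi' (e.trans b)
        have := hlen h'
        omega
  · intro x w hwx
    show sInf (Z w (f x)) = K
    apply le_antisymm (hle w _ K (Or.inl rfl))
    rcases hmem w (f x) with e | ⟨e, e'⟩ | ⟨y', h', hi', e⟩
    · omega
    · exact absurd (hf e).symm hwx
    · have hm' : f x ∈ (p h').support :=
        Set.mem_of_eq_of_mem (s := {t | t ∈ (p h').support}) e.symm (Walk.getVert_mem_support _ _)
      rcases hint h' x hm' with e' | e'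
      · exact absurd e'.symm hwx
      · subst e'
        have := hlast w x h' _ hi' e
        have := hlen h'
        omega

end Helpers

/-- Let `ℋ` be a minor-closed class of graphs and `X ∉ ℋ`. Then for
every `k : ℕ`, every `(≥ k)`-subdivision of `X` has radial `ℋ`-width at least `k / 4`. -/
theorem subdivision_of_forbidden_minor_large_radial_width
    (ℋ : ∀ n : ℕ, SimpleGraph (Fin n) → Prop) (hmc : MinorClosed ℋ)
    {m : ℕ} (X : SimpleGraph (Fin m)) (hX : ¬ ℋ m X) (k : ℕ)
    {V : Type*} [Fintype V] (G : SimpleGraph V)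
    (hsub : IsSubdivGE k X (⊤ : G.Subgraph)) :
    ∀ (n : ℕ) (Hg : SimpleGraph (Fin n)) (B : Fin n → Set V), ℋ n Hg →
      IsGraphDecomp G Hg B → ∀ r : ℕ, (∀ h, radiusLE (G.induce (B h)) r) →
      (k : ℚ) / 4 ≤ (r : ℚ) := by
  intro n Hg B hH hB r hr
  by_contra hlt
  have hk : 4 * r < k := by
    have : (r : ℚ) < k / 4 := not_le.mp hlt
    have : (4 * r : ℚ) < k := by linarith
    exact_mod_cast this
  apply hX
  apply hmc X Hg hH
  obtain ⟨f, p, hf, hpath, hlen, hrev, hint, hdis, hverts, hedges⟩ := hsub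
  obtain ⟨D, D1, D2, D3, D4⟩ := exists_D f p hf hpath hlen hint hdis
  -- covering
  have hcov : ∀ v : V, (∃ w, v = f w) ∨ ∃ (x y : Fin m) (h : X.Adj x y), v ∈ (p h).support := by
    intro v
    have : v ∈ (⊤ : G.Subgraph).verts := trivial
    rw [hverts] at this
    rcases this with ⟨w, rfl⟩ | h
    · exact Or.inl ⟨w, rfl⟩
    · exact Or.inr h
  have hadj : ∀ u v, G.Adj u v → ∃ (x y : Fin m) (h : X.Adj x y), ∃ i < (p h).length,
      (u = (p h).getVert i ∧ v = (p h).getVert (i + 1)) ∨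
      (v = (p h).getVert i ∧ u = (p h).getVert (i + 1)) := by
    intro u v huv
    have : s(u, v) ∈ (⊤ : G.Subgraph).edgeSet := huv
    rw [hedges] at this
    obtain ⟨x, y, h, he⟩ := this
    rw [Walk.mk_mem_edges_iff_exists] at he
    obtain ⟨i, hi, e⟩ := he
    refine ⟨x, y, h, i, hi, ?_⟩
    rw [Sym2.eq_iff] at e
    rcases e with ⟨rfl, rfl⟩ | ⟨rfl, rfl⟩
    · exact Or.inl ⟨rfl, rfl⟩
    · exact Or.inr ⟨rfl, rfl⟩
  have D2' : ∀ x y (h : X.Adj x y) i, i ≤ (p h).length →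
      D y ((p h).getVert i) = min ((p h).length - i) (k + 1) := by
    intro x y h i hi
    have := D2 y x h.symm ((p h).length - i) (by rw [hrev h, Walk.length_reverse]; omega)
    rw [hrev h, Walk.getVert_reverse] at this
    rwa [show (p h).length - ((p h).length - i) = i by omega] at this
  have hL := hlen
  -- Lipschitz
  have Dlip : ∀ w u v, G.Adj u v → D w u ≤ D w v + 1 := by
    intro w u v huv
    obtain ⟨x, y, h, i, hi, e⟩ := hadj u v huv
    by_cases hx : w = x
    · subst hx
      have a := D2 w y h i hi.le
      have b := D2 w y h (i + 1) hi
      rcases e with ⟨rfl, rfl⟩ | ⟨rfl, rfl⟩ <;> omega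
    · by_cases hy : w = y
      · subst hy
        have a := D2' x w h i hi.le
        have b := D2' x w h (i + 1) hi
        rcases e with ⟨rfl, rfl⟩ | ⟨rfl, rfl⟩ <;> omega
      · have a := D3 x y h w hx hy _ ((p h).getVert_mem_support i)
        have b := D3 x y h w hx hy _ ((p h).getVert_mem_support (i + 1))
        rcases e with ⟨rfl, rfl⟩ | ⟨rfl, rfl⟩ <;> omega
  have Dsum : ∀ x y v, x ≠ y → k + 1 ≤ D x v + D y v := by
    intro x y v hxy
    rcases hcov v with ⟨w, rfl⟩ | ⟨a, b, h, hv⟩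
    · by_cases hx : x = w
      · subst hx
        have := D4 x y hxy.symm
        omega
      · have := D4 w x hx
        omega
    · by_cases hx : x ≠ a ∧ x ≠ b
      · have := D3 a b h x hx.1 hx.2 v hv
        omega
      by_cases hy : y ≠ a ∧ y ≠ b
      · have := D3 a b h y hy.1 hy.2 v hv
        omega
      obtain ⟨i, rfl, hi⟩ := Walk.mem_support_iff_exists_getVert.mp hv
      have e1 := D2 a b h i hi
      have e2 := D2' a b h i hi
      have := hlen h
      have : (x = a ∧ y = b) ∨ (x = b ∧ y = a) := by
        by_cases x = a <;> by_cases x = b <;> by_cases y = a <;> by_cases y = b <;> simp_all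
      rcases this with ⟨rfl, rfl⟩ | ⟨rfl, rfl⟩ <;> omega
  -- interior potential
  classical
  let φ : Fin m → Fin m → V → ℕ := fun x y v =>
    if ∃ h : X.Adj x y, v ∈ (p h).support then min (D x v) (D y v) else 0
  have φpos : ∀ x y v, 0 < φ x y v → (∃ h : X.Adj x y, v ∈ (p h).support) ∧ v ≠ f x ∧ v ≠ f y := by
    intro x y v hv
    by_cases hc : ∃ h : X.Adj x y, v ∈ (p h).support
    · refine ⟨hc, ?_, ?_⟩
      · rintro rfl
        simp [φ, D1] at hv
      · rintro rfl
        simp [φ, D1] at hv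
    · simp [φ, hc] at hv
  have φother : ∀ x y a b (h : X.Adj a b), s(x, y) ≠ s(a, b) → ∀ v ∈ (p h).support,
      φ x y v = 0 := by
    intro x y a b h hne v hv
    by_contra hp
    obtain ⟨⟨h', hv'⟩, h1, h2⟩ := φpos x y v (Nat.pos_of_ne_zero hp)
    rcases (hdis h' h hne v hv' hv).1 with e | e
    · exact h1 e
    · exact h2 e
  have φlip : ∀ x y u v, G.Adj u v → φ x y u ≤ φ x y v + 1 := by
    intro x y u v huv
    obtain ⟨a, b, h, i, hi, e⟩ := hadj u v huv
    have hu : u ∈ (p h).support := by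
      rcases e with ⟨rfl, -⟩ | ⟨-, rfl⟩ <;> exact Walk.getVert_mem_support _ _
    have hv : v ∈ (p h).support := by
      rcases e with ⟨-, rfl⟩ | ⟨rfl, -⟩ <;> exact Walk.getVert_mem_support _ _
    by_cases hs : s(x, y) = s(a, b)
    · have hc : ∃ h' : X.Adj x y, u ∈ (p h').support ∧ v ∈ (p h').support := by
        rw [Sym2.eq_iff] at hs
        rcases hs with ⟨rfl, rfl⟩ | ⟨rfl, rfl⟩
        · exact ⟨h, hu, hv⟩
        · refine ⟨h.symm, ?_⟩
          rw [hrev h]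
          simp [hu, hv]
      obtain ⟨h', hu', hv'⟩ := hc
      have e1 : φ x y u = min (D x u) (D y u) := if_pos ⟨h', hu'⟩
      have e2 : φ x y v = min (D x v) (D y v) := if_pos ⟨h', hv'⟩
      have := Dlip x u v huv
      have := Dlip y u v huv
      omega
    · rw [φother x y a b h hs u hu]
      omega
  -- centres
  have hcent : ∀ h, (∃ v, v ∈ B h) → ∃ z, ∀ ψ : V → ℕ, (∀ u v, G.Adj u v → ψ u ≤ ψ v + 1) →
      ∀ v ∈ B h, ψ z ≤ ψ v + r ∧ ψ v ≤ ψ z + r := by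
    rintro h ⟨v, hv⟩
    obtain ⟨z, hz⟩ := hr h ⟨⟨v, hv⟩⟩
    exact ⟨z, fun ψ hψ w hw => lip_dist ψ hψ (B h) (hz ⟨w, hw⟩)⟩
  let A : Fin m → Set V := fun x => {v | D x v ≤ r}
  let M : Fin m → Fin m → Set V := fun x y => {v | ∃ h : X.Adj x y, ∃ i, r < i ∧
    i + r < (p h).length ∧ (p h).getVert i = v}
  have hMφ : ∀ x y v, v ∈ M x y → r < φ x y v := by
    rintro x y v ⟨h, i, hi, hi', rfl⟩
    have e1 : φ x y ((p h).getVert i) = _ := if_pos ⟨h, (p h).getVert_mem_support i⟩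
    have a := D2 x y h i (by omega)
    have b := D2' x y h i (by omega)
    omega
  apply minor_of_models X Hg (fun x => {h | ∃ v ∈ A x, v ∈ B h})
    (fun x y => {h | ∃ v ∈ M x y, v ∈ B h})
  · intro x
    apply nodes_connected hB
    rw [connected_iff_exists_forall_reachable]
    refine ⟨⟨f x, by simp [A, D1]⟩, ?_⟩
    rintro ⟨v, hv⟩
    have hv' : D x v ≤ r := hv
    have : v = f x ∨ ∃ y, ∃ h : X.Adj x y, v ∈ (p h).support := by
      rcases hcov v with ⟨w, rfl⟩ | ⟨a, b, h, hs⟩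
      · by_cases e : x = w
        · subst e; exact Or.inl rfl
        · have := D4 w x e
          omega
      · by_cases ha : x = a
        · subst ha; exact Or.inr ⟨b, h, hs⟩
        · by_cases hb : x = b
          · subst hb
            refine Or.inr ⟨a, h.symm, ?_⟩
            rw [hrev h]; simpa using hs
          · have := D3 a b h x ha hb v hs
            omega
    rcases this with rfl | ⟨y, h, hs⟩
    · exact Reachable.refl _
    · obtain ⟨i, rfl, hi⟩ := Walk.mem_support_iff_exists_getVert.mp hs
      have e := D2 x y h i hi
      have := seg_reach (p h) (A x) 0 i (by omega) (by
        intro t _ ht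
        have := D2 x y h t (by omega)
        show D x _ ≤ r
        omega)
      convert this using 2
      · simp
      · simp
  · rintro x y hxy h ⟨v, hv, hvB⟩ ⟨w, hw, hwB⟩
    obtain ⟨z, hz⟩ := hcent h ⟨v, hvB⟩
    have h1 := hz _ (Dlip x) v hvB
    have h2 := hz _ (Dlip y) w hwB
    have h3 : D x v ≤ r := hv
    have h4 : D y w ≤ r := hw
    have := Dsum x y z hxy
    omega
  · intro x y h
    apply nodes_connected hB
    rw [connected_iff_exists_forall_reachable]
    have := hlen h
    refine ⟨⟨(p h).getVert (r + 1), h, r + 1, by omega, by omega, rfl⟩, ?_⟩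
    rintro ⟨v, h', i, hi, hi', rfl⟩
    have := seg_reach (p h) (M x y) (r + 1) (i - (r + 1)) (by omega) (by
      intro t h1 h2
      exact ⟨h, t, by omega, by omega, rfl⟩)
    convert this using 3
    omega
  · intro x y h
    have := hlen h
    obtain ⟨b, h1, h2⟩ := hB.2.1 ((p h).adj_getVert_succ (i := r) (by omega))
    refine ⟨b, ⟨_, ⟨h, r + 1, by omega, by omega, rfl⟩, h2⟩, ⟨_, ?_, h1⟩⟩
    have := D2 x y h r (by omega)
    show D x _ ≤ r
    omega
  · intro x y h
    have := hlen h
    obtain ⟨b, h1, h2⟩ := hB.2.1 ((p h).adj_getVert_succ (i := (p h).length - r - 1) (by omega))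
    refine ⟨b, ⟨_, ⟨h, (p h).length - r - 1, by omega, by omega, rfl⟩, h1⟩, ⟨_, ?_, h2⟩⟩
    have := D2' x y h ((p h).length - r - 1 + 1) (by omega)
    show D y _ ≤ r
    omega
  · rintro x y x' y' h h' hne b ⟨v, hv, hvB⟩ ⟨w, hw, hwB⟩
    obtain ⟨z, hz⟩ := hcent b ⟨v, hvB⟩
    have h1 := hz _ (φlip x y) v hvB
    have h2 := hz _ (φlip x' y') w hwB
    have h3 := hMφ _ _ _ hv
    have h4 := hMφ _ _ _ hw
    obtain ⟨⟨g, hg⟩, -⟩ := φpos x' y' z (by omega)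
    have := φother x y x' y' g hne z hg
    omega
  · rintro x y w h hwx hwy b ⟨v, hv, hvB⟩ ⟨u, hu, huB⟩
    obtain ⟨z, hz⟩ := hcent b ⟨v, hvB⟩
    have h1 := hz _ (φlip x y) v hvB
    have h2 := hz _ (Dlip w) u huB
    have h3 := hMφ _ _ _ hv
    have h4 : D w u ≤ r := hu
    obtain ⟨⟨g, hg⟩, -⟩ := φpos x y z (by omega)
    have := D3 x y g w hwx hwy z hg
    omega

end RadialPaper
end

section
/- Let X be a c-quasi-geodesic subgraph of a graph G for some c ∈ ℕ. Then for every graph-decomposition (H,(V_h)_{h ∈ V(H)}) of G, there exists an H-decomposition of X with radial width at most 3c times the radial width of (H,(V_h)). -/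
open SimpleGraph

namespace RadialPaper

variable {V W N : Type*}

theorem aux_reach {N : Type*} (Hg : SimpleGraph N) {T S : Set N} (hTS : T ⊆ S)
    (hT : (Hg.induce T).Connected) {a b : N} (ha : a ∈ T) (hb : b ∈ T) :
    (Hg.induce S).Reachable ⟨a, hTS ha⟩ ⟨b, hTS hb⟩ :=
  (hT.preconnected ⟨a, ha⟩ ⟨b, hb⟩).map (Hg.induceHomOfLE hTS).toHom

theorem aux_walk {V : Type*} {K : SimpleGraph V} {u v : V} {n : ℕ}
    (h : K.edist u v ≤ (n : ℕ∞)) : ∃ p : K.Walk u v, p.length ≤ n := by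
  obtain ⟨p, hp⟩ := SimpleGraph.exists_walk_of_edist_ne_top
    (ne_top_of_le_ne_top (ENat.coe_ne_top n) h)
  refine ⟨p, ?_⟩
  rw [← hp] at h
  exact_mod_cast h

theorem aux_edist_induce {V : Type*} {K : SimpleGraph V} {S : Set V} {u v : V} (p : K.Walk u v)
    (hp : ∀ x ∈ p.support, x ∈ S) :
    (K.induce S).edist ⟨u, hp _ p.start_mem_support⟩ ⟨v, hp _ p.end_mem_support⟩
      ≤ (p.length : ℕ∞) := by
  have h := (p.induce S hp).edist_le
  have h2 : (p.induce S hp).length = p.length := by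
    have h3 := congrArg SimpleGraph.Walk.length (SimpleGraph.Walk.map_induce p hp)
    rwa [SimpleGraph.Walk.length_map] at h3
  rwa [h2] at h

/-- The thickened bags. -/
def thick {V N : Type*} {G : SimpleGraph V} (X : G.Subgraph) (B : N → Set V) (n : ℕ) (h : N) :
    Set X.verts :=
  {x | ∃ u : X.verts, (u : V) ∈ B h ∧ ∃ p : X.coe.Walk u x, p.length ≤ n}

theorem aux_conn {V N : Type*} {G : SimpleGraph V} (X : G.Subgraph) (Hg : SimpleGraph N)
    (B : N → Set V) (hdec : IsGraphDecomp G Hg B) (n : ℕ) (x : X.verts) (h0 : N)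
    (hx : (x : V) ∈ B h0) (hS0 : h0 ∈ {h | x ∈ thick X B n h}) :
    ∀ (y u : X.verts) (p : X.coe.Walk u y), y = x → p.length ≤ n → ∀ h, (u : V) ∈ B h →
      ∃ hS : h ∈ {h | x ∈ thick X B n h},
        (Hg.induce {h | x ∈ thick X B n h}).Reachable ⟨h, hS⟩ ⟨h0, hS0⟩ := by
  intro y u p
  induction p with
  | @nil w =>
    rintro rfl hl h hh
    have hTS : {h | (w : V) ∈ B h} ⊆ {h | w ∈ thick X B n h} :=
      fun k hk => ⟨_, hk, .nil, by simp⟩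
    exact ⟨hTS hh, aux_reach Hg hTS (hdec.2.2 _) hh hx⟩
  | @cons u w y a q ih =>
    rintro rfl hl h hh
    have hTS : {h | (u : V) ∈ B h} ⊆ {h | y ∈ thick X B n h} :=
      fun k hk => ⟨u, hk, .cons a q, hl⟩
    obtain ⟨h1, hu1, hw1⟩ := hdec.2.1 (X.coe_adj_sub _ _ a)
    obtain ⟨h1S, hr⟩ := ih rfl (by simp at hl; omega) h1 hw1
    exact ⟨hTS hh, (aux_reach Hg hTS (hdec.2.2 _) hh hu1).trans hr⟩

/-- Let `X` be a `c`-quasi-geodesic subgraph of `G`. Then for every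
graph-decomposition `(Hg, B)` of `G` (of radial width at most `r`), there is an
`Hg`-decomposition of `X` of radial width at most `3·c·r`. -/
theorem quasi_geodesic_subgraph_decomposition
    {V N : Type*} [Fintype V] [Fintype N] (G : SimpleGraph V) (X : G.Subgraph) (c : ℕ)
    (hgeo : IsQuasiGeodesic G X c) (Hg : SimpleGraph N) (B : N → Set V)
    (hdec : IsGraphDecomp G Hg B) (r : ℕ) (hw : ∀ h, radiusLE (G.induce (B h)) r) :
    ∃ B' : N → Set X.verts, IsGraphDecomp X.coe Hg B' ∧
      ∀ h, radiusLE (X.coe.induce (B' h)) (3 * c * r) := by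
  have hsub : ∀ (x : X.verts) h, (x : V) ∈ B h → x ∈ thick X B (c * r) h :=
    fun x h hx => ⟨x, hx, .nil, by simp⟩
  refine ⟨thick X B (c * r), ⟨?_, ?_, ?_⟩, ?_⟩
  · intro x
    obtain ⟨h, hh⟩ := hdec.1 x
    exact ⟨h, hsub x h hh⟩
  · intro u v a
    obtain ⟨h, h1, h2⟩ := hdec.2.1 (X.coe_adj_sub _ _ a)
    exact ⟨h, hsub _ _ h1, hsub _ _ h2⟩
  · intro x
    obtain ⟨h0, hx⟩ := hdec.1 x
    have key : ∀ k : {h | x ∈ thick X B (c * r) h},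
        (Hg.induce {h | x ∈ thick X B (c * r) h}).Reachable k ⟨h0, hsub x h0 hx⟩ := by
      rintro ⟨k, u, hu, p, hp⟩
      obtain ⟨_, hr⟩ := aux_conn X Hg B hdec (c * r) x h0 hx (hsub x h0 hx) x u p rfl hp k hu
      exact hr
    have : Nonempty {h | x ∈ thick X B (c * r) h} := ⟨⟨h0, hsub x h0 hx⟩⟩
    exact ⟨fun a b => (key a).trans (key b).symm⟩
  · rintro h ⟨⟨y0, x0, hx0, -⟩⟩
    refine ⟨⟨x0, hsub x0 h hx0⟩, ?_⟩
    rintro ⟨y, x1, hx1, q, hq⟩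
    obtain ⟨z, hz⟩ := hw h ⟨⟨x0, hx0⟩⟩
    have hG : ∀ x : V, x ∈ B h → G.edist z x ≤ (r : ℕ∞) := by
      intro x hx
      obtain ⟨p, hp⟩ := aux_walk (hz ⟨x, hx⟩)
      have := (p.map (SimpleGraph.Embedding.induce (B h)).toHom).edist_le
      refine this.trans ?_
      rw [SimpleGraph.Walk.length_map]
      exact_mod_cast hp
    have hX : X.coe.edist x0 x1 ≤ ((2 * (c * r) : ℕ) : ℕ∞) := by
      refine (hgeo x0 x1).trans ?_
      have h1 : G.edist (x0 : V) x1 ≤ ((r + r : ℕ) : ℕ∞) := by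
        refine (SimpleGraph.edist_triangle (v := (z : V))).trans ?_
        push_cast
        refine add_le_add ?_ (hG _ hx1)
        rw [SimpleGraph.edist_comm]
        exact hG _ hx0
      calc (c : ℕ∞) * G.edist (x0 : V) x1 ≤ (c : ℕ∞) * ((r + r : ℕ) : ℕ∞) := by gcongr
        _ = ((2 * (c * r) : ℕ) : ℕ∞) := by
          rw [← Nat.cast_mul]; congr 1; ring
    obtain ⟨p, hp⟩ := aux_walk hX
    have hpS : ∀ w ∈ p.support, w ∈ thick X B (c * r) h := by
      classical
      intro w hwp
      have hl : (p.takeUntil w hwp).length + (p.dropUntil w hwp).length = p.length := by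
        rw [← SimpleGraph.Walk.length_append, SimpleGraph.Walk.take_spec]
      by_cases hc : (p.takeUntil w hwp).length ≤ c * r
      · exact ⟨x0, hx0, _, hc⟩
      · exact ⟨x1, hx1, (p.dropUntil w hwp).reverse, by
          rw [SimpleGraph.Walk.length_reverse]; omega⟩
    have hqS : ∀ w ∈ q.support, w ∈ thick X B (c * r) h := by
      classical
      intro w hwq
      exact ⟨x1, hx1, q.takeUntil w hwq, (q.length_takeUntil_le_length hwq).trans hq⟩
    have hall : ∀ w ∈ (p.append q).support, w ∈ thick X B (c * r) h := by
      intro w hw'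
      rcases SimpleGraph.Walk.mem_support_append_iff _ _ |>.1 hw' with h' | h'
      · exact hpS w h'
      · exact hqS w h'
    refine (aux_edist_induce _ hall).trans ?_
    rw [SimpleGraph.Walk.length_append]
    have : p.length + q.length ≤ 3 * c * r := by
      rw [mul_assoc]; omega
    exact_mod_cast this

end RadialPaper
end

section
/- Let φ be an (m,a,M,A,r)-quasi-isometry from a graph H to a graph G. Write B_h := B_G(φ(h), r), and for each h ∈ V(H) set V_h := the union of B_{h'} over all h' ∈ B_H(h, mr + ⌈(m+a)/2⌉). Then (H,(V_h)_{h ∈ V(H)}) is a graph-decomposition of G of outer-radial width at most r + M(mr + ⌈(m+a)/2⌉) + A and radial spread at most 4mr + m + 2a + 1. -/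
open SimpleGraph

namespace RadialPaper

variable {V W N : Type*}

theorem exists_walk_of_edist_le {V : Type*} {G : SimpleGraph V} {u v : V} {k : ℕ}
    (h : G.edist u v ≤ (k : ℕ∞)) : ∃ p : G.Walk u v, p.length ≤ k := by
  have hne : G.edist u v ≠ ⊤ := fun h' => by
    rw [h'] at h; exact absurd h (by simp)
  obtain ⟨p, hp⟩ := G.exists_walk_of_edist_ne_top hne
  refine ⟨p, ?_⟩
  rw [← hp] at h
  exact_mod_cast h

theorem edist_le_of_walk {V : Type*} {G : SimpleGraph V} {u v : V} {k : ℕ}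
    (p : G.Walk u v) (h : p.length ≤ k) : G.edist u v ≤ (k : ℕ∞) :=
  (Walk.edist_le p).trans (by exact_mod_cast h)

theorem edist_induce_le {V : Type*} {G : SimpleGraph V} {S : Set V} {u v : V}
    (p : G.Walk u v) : ∀ (hS : ∀ x ∈ p.support, x ∈ S) (hu : u ∈ S) (hv : v ∈ S),
    (G.induce S).edist ⟨u, hu⟩ ⟨v, hv⟩ ≤ (p.length : ℕ∞) := by
  induction p with
  | nil => intro _ _ _; simp
  | @cons a b c hab q ih =>
    intro hS hu hv
    have hb : b ∈ S := hS b (by simp)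
    have h1 := ih (fun x hx => hS x (by simp [hx])) hb hv
    have h2 : (G.induce S).edist ⟨a, hu⟩ ⟨b, hb⟩ ≤ 1 :=
      edist_le_one_iff_adj_or_eq.2 (Or.inl hab)
    calc _ ≤ _ := SimpleGraph.edist_triangle (v := ⟨b, hb⟩)
      _ ≤ 1 + (q.length : ℕ∞) := add_le_add h2 h1
      _ = _ := by simp [add_comm]

theorem split_walk {V : Type*} {G : SimpleGraph V} {u v x : V}
    (p : G.Walk u v) (hx : x ∈ p.support) :
    ∃ i j : ℕ, i + j = p.length ∧ G.edist x u ≤ i ∧ G.edist x v ≤ j := by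
  classical
  refine ⟨(p.takeUntil x hx).length, (p.dropUntil x hx).length, ?_, ?_, ?_⟩
  · rw [← Walk.length_append, Walk.take_spec]
  · rw [edist_comm]; exact Walk.edist_le _
  · exact Walk.edist_le _

/-- Let `φ` be an `(m, a, M, A, r)`-quasi-isometry from `Hg` to `G`.
With `V_h` the union of the balls `B_G(φ h', r)` over all `h'` in the ball
`B_{Hg}(h, m·r + ⌈(m+a)/2⌉)`, the family `(V_h)` is a graph-decomposition of `G` of
outer-radial width at most `r + M·(m·r + ⌈(m+a)/2⌉) + A` and radial spread at most
`4·m·r + m + 2·a + 1`. -/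
theorem decomposition_of_quasi_isometry
    {V N : Type*} [Fintype V] [Fintype N] (G : SimpleGraph V) (Hg : SimpleGraph N)
    (m a M A r : ℕ) (hm : 1 ≤ m) (hM : 1 ≤ M) (φ : N → V)
    (hqi : IsQuasiIsometry Hg G m a M A r φ)
    (B : N → Set V)
    (hB : B = fun h => {x : V | ∃ h' : N,
      Hg.edist h h' ≤ ((m * r + (m + a + 1) / 2 : ℕ) : ℕ∞) ∧
      G.edist (φ h') x ≤ (r : ℕ∞)}) :
    IsGraphDecomp G Hg B ∧
      OuterRadialWidthLE G B (r + M * (m * r + (m + a + 1) / 2) + A) ∧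
      RadialSpreadLE Hg B (4 * m * r + m + 2 * a + 1) := by
  obtain ⟨h1, h2, h3⟩ := hqi
  have key : ∀ (h h' : N) (k : ℕ), G.edist (φ h) (φ h') ≤ (k : ℕ∞) →
      ∃ p : Hg.Walk h h', p.length ≤ m * k + a := by
    intro h h' k hk
    apply exists_walk_of_edist_le
    refine (h1 h h').trans ?_
    push_cast
    gcongr
  set R := m * r + (m + a + 1) / 2 with hR
  have hmem : ∀ h x, x ∈ B h ↔ ∃ h' : N, Hg.edist h h' ≤ (R : ℕ∞) ∧
      G.edist (φ h') x ≤ (r : ℕ∞) := by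
    intro h x; rw [hB]; rfl
  have hcen : ∀ v : V, ∃ z : {h : N | v ∈ B h}, ∀ w : {h : N | v ∈ B h},
      (Hg.induce {h : N | v ∈ B h}).edist z w ≤ ((4 * m * r + m + 2 * a + 1 : ℕ) : ℕ∞) := by
    intro v
    obtain ⟨h0, hh0⟩ := h3 v
    have hz : v ∈ B h0 := (hmem _ _).2 ⟨h0, by simp, by rwa [edist_comm]⟩
    refine ⟨⟨h0, hz⟩, ?_⟩
    rintro ⟨h, hh⟩
    obtain ⟨h', hd, hv⟩ := (hmem _ _).1 hh
    have hz' : v ∈ B h' := (hmem _ _).2 ⟨h', by simp, hv⟩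
    obtain ⟨p, hp⟩ := key h0 h' (r + r) (by
      push_cast
      refine (SimpleGraph.edist_triangle (v := v)).trans (add_le_add ?_ ?_)
      · rwa [edist_comm]
      · rwa [edist_comm])
    rw [edist_comm] at hd
    obtain ⟨q, hq⟩ := exists_walk_of_edist_le hd
    have e1 := edist_induce_le (S := {h : N | v ∈ B h}) p (by
      intro x hx
      obtain ⟨i, j, hij, hi, hj⟩ := split_walk p hx
      refine (hmem _ _).2 ?_
      have hrr : m * (r + r) = m * r + m * r := by ring
      rcases le_total i j with hle | hle
      · refine ⟨h0, hi.trans ?_, by rwa [edist_comm]⟩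
        exact_mod_cast (by omega : i ≤ R)
      · refine ⟨h', hj.trans ?_, hv⟩
        exact_mod_cast (by omega : j ≤ R)) hz hz'
    have e2 := edist_induce_le (S := {h : N | v ∈ B h}) q (by
      intro x hx
      obtain ⟨i, j, hij, hi, hj⟩ := split_walk q hx
      refine (hmem _ _).2 ⟨h', hi.trans ?_, hv⟩
      exact_mod_cast (by omega : i ≤ R)) hz' hh
    refine (SimpleGraph.edist_triangle (v := ⟨h', hz'⟩)).trans ((add_le_add e1 e2).trans ?_)
    have hrr : m * (r + r) = m * r + m * r := by ring
    have h4 : 4 * m * r = 4 * (m * r) := by ring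
    exact_mod_cast (by omega : p.length + q.length ≤ 4 * m * r + m + 2 * a + 1)
  refine ⟨⟨?_, ?_, ?_⟩, ?_, ?_⟩
  · intro v
    obtain ⟨z, _⟩ := hcen v
    exact ⟨z.1, z.2⟩
  · intro u v huv
    obtain ⟨hu, hhu⟩ := h3 u
    obtain ⟨hv, hhv⟩ := h3 v
    obtain ⟨p, hp⟩ := key hu hv (r + 1 + r) (by
      push_cast
      refine (SimpleGraph.edist_triangle (v := v)).trans (add_le_add ?_ hhv)
      refine (SimpleGraph.edist_triangle (v := u)).trans (add_le_add ?_ ?_)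
      · rwa [edist_comm]
      · exact edist_le_one_iff_adj_or_eq.2 (Or.inl huv))
    have hrr : m * (r + 1 + r) = m * r + m * r + m := by ring
    have ht : (p.take R).length ≤ R := by simp
    have hd : (p.drop R).length ≤ R := by
      simp; omega
    refine ⟨p.getVert R, (hmem _ _).2 ⟨hu, ?_, ?_⟩, (hmem _ _).2 ⟨hv, ?_, ?_⟩⟩
    · rw [edist_comm]; exact edist_le_of_walk _ ht
    · rwa [edist_comm]
    · exact edist_le_of_walk _ hd
    · rwa [edist_comm]
  · intro v
    obtain ⟨z, hz⟩ := hcen v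
    have hr : ∀ w, (Hg.induce {h : N | v ∈ B h}).Reachable z w := fun w =>
      let ⟨p, _⟩ := exists_walk_of_edist_le (hz w)
      ⟨p⟩
    haveI : Nonempty {h : N | v ∈ B h} := ⟨z⟩
    exact ⟨fun x y => (hr x).symm.trans (hr y)⟩
  · intro h
    refine ⟨φ h, fun v hv => ?_⟩
    obtain ⟨h', hd, hv'⟩ := (hmem _ _).1 hv
    refine (SimpleGraph.edist_triangle (v := φ h')).trans
      ((add_le_add (h2 h h') hv').trans ?_)
    calc (M : ℕ∞) * Hg.edist h h' + A + r ≤ (M : ℕ∞) * (R : ℕ∞) + A + r := by gcongr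
      _ = ((M * R + A + r : ℕ) : ℕ∞) := by push_cast; rfl
      _ ≤ _ := by exact_mod_cast (by omega : M * R + A + r ≤ r + M * R + A)
  · intro v _
    exact hcen v

end RadialPaper
end

section
/- Let G be a graph, let X be a c-quasi-geodesic subgraph of G for some c ∈ ℕ, and let v be a vertex of G. If P is a shortest v–X path in G (a path of minimum length in G from v to a vertex of X), then the subgraph X ∪ P is (2c+1)-quasi-geodesic in G. -/
open SimpleGraph

namespace RadialPaper

variable {V W N : Type*}

theorem aux_edist_le {V : Type*} {G : SimpleGraph V} (Y : G.Subgraph) {a b : V} (Q : G.Walk a b) :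
    Q.toSubgraph ≤ Y → ∀ (ha : a ∈ Y.verts) (hb : b ∈ Y.verts),
      Y.coe.edist ⟨a, ha⟩ ⟨b, hb⟩ ≤ (Q.length : ℕ∞) := by
  induction Q with
  | nil => intro _ ha hb; simp
  | @cons a m b h Q ih =>
    intro hQ ha hb
    rw [Walk.toSubgraph, sup_le_iff] at hQ
    have hadj : Y.Adj a m := hQ.1.2 (by simp)
    have hm : m ∈ Y.verts := hadj.snd_mem
    have h1 : Y.coe.edist ⟨a, ha⟩ ⟨m, hm⟩ ≤ 1 := by
      have : Y.coe.Adj ⟨a, ha⟩ ⟨m, hm⟩ := hadj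
      exact (edist_eq_one_iff_adj.2 this).le
    calc Y.coe.edist ⟨a, ha⟩ ⟨b, hb⟩ ≤ Y.coe.edist ⟨a, ha⟩ ⟨m, hm⟩ + Y.coe.edist ⟨m, hm⟩ ⟨b, hb⟩ :=
          SimpleGraph.edist_triangle
      _ ≤ 1 + (Q.length : ℕ∞) := add_le_add h1 (ih hQ.2 hm hb)
      _ = _ := by rw [Walk.length_cons]; push_cast; ring

theorem aux_le_edist {V : Type*} {G : SimpleGraph V} {a b : V} (n : ℕ∞)
    (h : ∀ Q : G.Walk a b, n ≤ (Q.length : ℕ∞)) : n ≤ G.edist a b := by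
  unfold SimpleGraph.edist
  exact le_iInf h

/-- a subsegment of a shortest path is geodesic in any larger subgraph -/
theorem aux_seg {V : Type*} {G : SimpleGraph V} (Y : G.Subgraph) {v x a b : V}
    (P : G.Walk v x) (hshort : ∀ Q : G.Walk v x, P.length ≤ Q.length) (hY : P.toSubgraph ≤ Y)
    (A : G.Walk v a) (S : G.Walk a b) (R : G.Walk b x) (hP : P = A.append (S.append R))
    (ha : a ∈ Y.verts) (hb : b ∈ Y.verts) :
    Y.coe.edist ⟨a, ha⟩ ⟨b, hb⟩ ≤ G.edist a b := by
  apply aux_le_edist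
  intro Q
  have h1 := hshort (A.append (Q.append R))
  subst hP
  simp only [Walk.length_append] at h1
  simp only [Walk.toSubgraph_append, sup_le_iff] at hY
  refine (aux_edist_le Y S hY.2.1 ha hb).trans ?_
  exact_mod_cast (by omega : S.length ≤ Q.length)

theorem aux_path {V : Type*} {G : SimpleGraph V} (Y : G.Subgraph) {v x a b : V}
    (P : G.Walk v x) (hshort : ∀ Q : G.Walk v x, P.length ≤ Q.length) (hY : P.toSubgraph ≤ Y)
    (haP : a ∈ P.support) (hbP : b ∈ P.support)
    (ha : a ∈ Y.verts) (hb : b ∈ Y.verts) :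
    Y.coe.edist ⟨a, ha⟩ ⟨b, hb⟩ ≤ G.edist a b := by
  classical
  have hspec := P.take_spec haP
  have hb' := hbP
  rw [← hspec, Walk.mem_support_append_iff] at hb'
  rcases hb' with h | h
  · rw [SimpleGraph.edist_comm, SimpleGraph.edist_comm (u := a)]
    refine aux_seg Y P hshort hY ((P.takeUntil a haP).takeUntil b h)
      ((P.takeUntil a haP).dropUntil b h) (P.dropUntil a haP) ?_ hb ha
    rw [Walk.append_assoc, Walk.take_spec, Walk.take_spec]
  · refine aux_seg Y P hshort hY (P.takeUntil a haP) ((P.dropUntil a haP).takeUntil b h)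
      ((P.dropUntil a haP).dropUntil b h) ?_ ha hb
    rw [Walk.take_spec, Walk.take_spec]

theorem aux_mono {V : Type*} {G : SimpleGraph V} {X Y : G.Subgraph} (h : X ≤ Y) {a b : V}
    (ha : a ∈ X.verts) (hb : b ∈ X.verts) :
    Y.coe.edist ⟨a, h.1 ha⟩ ⟨b, h.1 hb⟩ ≤ X.coe.edist ⟨a, ha⟩ ⟨b, hb⟩ := by
  apply aux_le_edist
  intro Q
  have := SimpleGraph.edist_le (Q.map (Subgraph.inclusion h))
  rw [Walk.length_map] at this
  exact this

theorem aux_mixed {V : Type*} {G : SimpleGraph V} (X : G.Subgraph) (c : ℕ)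
    (hgeo : IsQuasiGeodesic G X c) (v : V) {x : V} (hx : x ∈ X.verts)
    (P : G.Walk v x)
    (hshort : ∀ y ∈ X.verts, ∀ Q : G.Walk v y, P.length ≤ Q.length)
    (Y : G.Subgraph) (hXY : X ≤ Y) (hPY : P.toSubgraph ≤ Y)
    {a b : V} (haX : a ∈ X.verts) (hbP : b ∈ P.support)
    (ha : a ∈ Y.verts) (hb : b ∈ Y.verts) :
    Y.coe.edist ⟨a, ha⟩ ⟨b, hb⟩ ≤ ((2 * c + 1 : ℕ) : ℕ∞) * G.edist a b := by
  classical
  have hxb : Y.coe.edist ⟨x, hXY.1 hx⟩ ⟨b, hb⟩ ≤ G.edist x b :=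
    aux_path Y P (hshort x hx) hPY P.end_mem_support hbP _ _
  have hd : G.edist x b ≤ G.edist a b := by
    apply aux_le_edist
    intro Q
    have h1 := hshort a haX ((P.takeUntil b hbP).append Q.reverse)
    have h2 := congrArg Walk.length (P.take_spec hbP)
    rw [Walk.length_append] at h1 h2
    rw [Walk.length_reverse] at h1
    have h3 := SimpleGraph.edist_le (P.dropUntil b hbP)
    rw [SimpleGraph.edist_comm] at h3
    refine h3.trans ?_
    exact_mod_cast (by omega : (P.dropUntil b hbP).length ≤ Q.length)
  have hax : Y.coe.edist ⟨a, ha⟩ ⟨x, hXY.1 hx⟩ ≤ c * G.edist a x :=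
    (aux_mono hXY haX hx).trans (hgeo ⟨a, haX⟩ ⟨x, hx⟩)
  have hax2 : G.edist a x ≤ G.edist a b + G.edist a b := by
    refine (SimpleGraph.edist_triangle (v := b)).trans ?_
    rw [SimpleGraph.edist_comm (u := b)]
    gcongr
  calc Y.coe.edist ⟨a, ha⟩ ⟨b, hb⟩
      ≤ Y.coe.edist ⟨a, ha⟩ ⟨x, hXY.1 hx⟩ + Y.coe.edist ⟨x, hXY.1 hx⟩ ⟨b, hb⟩ :=
        SimpleGraph.edist_triangle
    _ ≤ c * (G.edist a b + G.edist a b) + G.edist a b := by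
        refine add_le_add (hax.trans ?_) (hxb.trans hd)
        gcongr
    _ = _ := by push_cast; ring

/-- Let `X` be a `c`-quasi-geodesic subgraph of `G` and let `P` be a
shortest `v`–`X` path in `G`. Then `X ∪ P` is `(2c+1)`-quasi-geodesic in `G`. -/
theorem union_with_shortest_path_quasi_geodesic
    {V : Type*} [Fintype V] (G : SimpleGraph V) (X : G.Subgraph) (c : ℕ)
    (hgeo : IsQuasiGeodesic G X c) (v : V) {x : V} (hx : x ∈ X.verts)
    (P : G.Walk v x) (hP : P.IsPath)
    (hshort : ∀ y ∈ X.verts, ∀ Q : G.Walk v y, P.length ≤ Q.length) :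
    IsQuasiGeodesic G (X ⊔ P.toSubgraph) (2 * c + 1) := by
  have hXY : X ≤ X ⊔ P.toSubgraph := le_sup_left
  have hPY : P.toSubgraph ≤ X ⊔ P.toSubgraph := le_sup_right
  rintro ⟨a, ha⟩ ⟨b, hb⟩
  have ha' := ha
  have hb' := hb
  rw [Subgraph.verts_sup, Set.mem_union, Walk.mem_verts_toSubgraph] at ha' hb'
  rcases ha' with ha' | ha' <;> rcases hb' with hb' | hb'
  · refine ((aux_mono hXY ha' hb').trans (hgeo ⟨a, ha'⟩ ⟨b, hb'⟩)).trans ?_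
    gcongr
    omega
  · exact aux_mixed X c hgeo v hx P hshort _ hXY hPY ha' hb' ha hb
  · rw [SimpleGraph.edist_comm, SimpleGraph.edist_comm (u := a)]
    exact aux_mixed X c hgeo v hx P hshort _ hXY hPY hb' ha' hb ha
  · refine (aux_path _ P (hshort x hx) hPY ha' hb' ha hb).trans ?_
    refine le_mul_of_one_le_left (zero_le) ?_
    exact_mod_cast (by omega : 1 ≤ 2 * c + 1)

end RadialPaper
end

section
/- Let r, n, m₀, m₁ ∈ ℕ be such that m := n − m₀ − m₁ − 2r > 0. Let G be a graph containing a geodesic path P = p₀…p_n of length n, and write B_i := B_G(p_i, r) for 0 ≤ i ≤ n. Suppose that some connected component C of G − ⋃_{i=0}^{n} B_i has at least one neighbour in ⋃_{i=0}^{m₀} B_i and at least one neighbour in ⋃_{i=n−m₁}^{n} B_i, but no neighbours in ⋃_{i=m₀+1}^{n−m₁−1} B_i. Then G contains a geodesic cycle of length at least 2m. -/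
open SimpleGraph

namespace RadialPaper

variable {V W N : Type*}

/-- Parity of a walk. -/
def ws {V : Type*} {G : SimpleGraph V} (F : Sym2 V → ZMod 2) {u v : V} (w : G.Walk u v) : ZMod 2 :=
  (w.edges.map F).sum

section aux
variable {V : Type*} {G : SimpleGraph V} (F : Sym2 V → ZMod 2)

lemma ws_nil (u : V) : ws F (Walk.nil : G.Walk u u) = 0 := by simp [ws]

lemma ws_cons {u v w : V} (h : G.Adj u v) (q : G.Walk v w) :
    ws F (Walk.cons h q) = F s(u, v) + ws F q := by simp [ws]

lemma ws_append {u v w : V} (q : G.Walk u v) (q' : G.Walk v w) :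
    ws F (q.append q') = ws F q + ws F q' := by simp [ws]

lemma ws_reverse {u v : V} (q : G.Walk u v) : ws F q.reverse = ws F q := by
  simp [ws, List.sum_reverse]

lemma zmod2_self (a : ZMod 2) : a + a = 0 := CharTwo.add_self_eq_zero a

lemma split_closed {w u v : V} (c : G.Walk w w) (hu : u ∈ c.support) (hv : v ∈ c.support) :
    ∃ (a : G.Walk u v) (b : G.Walk v u), a.length + b.length = c.length ∧
      ws F a + ws F b = ws F c ∧ a.toSubgraph ⊔ b.toSubgraph = c.toSubgraph := by
  classical
  have key : ∃ d : G.Walk u u, d.length = c.length ∧ ws F d = ws F c ∧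
      d.toSubgraph = c.toSubgraph ∧ v ∈ d.support := by
    refine ⟨(c.dropUntil u hu).append (c.takeUntil u hu), ?_, ?_, ?_, ?_⟩
    · conv_rhs => rw [← c.take_spec hu]
      rw [Walk.length_append, Walk.length_append, add_comm]
    · conv_rhs => rw [← c.take_spec hu]
      rw [ws_append, ws_append, add_comm]
    · conv_rhs => rw [← c.take_spec hu]
      simp only [Walk.toSubgraph_append, sup_comm]
    · rw [← c.take_spec hu] at hv
      simp only [Walk.mem_support_append_iff] at hv ⊢
      exact hv.symm
  obtain ⟨d, h1, h2, h3, h4⟩ := key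
  refine ⟨d.takeUntil v h4, d.dropUntil v h4, ?_, ?_, ?_⟩
  · rw [← h1]; conv_rhs => rw [← d.take_spec h4]
    rw [Walk.length_append]
  · rw [← h2]; conv_rhs => rw [← d.take_spec h4]
    rw [ws_append]
  · rw [← h3]; conv_rhs => rw [← d.take_spec h4]
    simp only [Walk.toSubgraph_append]

lemma coe_edist_le {X : G.Subgraph} {u v : V} (a : G.Walk u v) (ha : a.toSubgraph ≤ X)
    (hu : u ∈ X.verts) (hv : v ∈ X.verts) :
    X.coe.edist ⟨u, hu⟩ ⟨v, hv⟩ ≤ (a.length : ℕ∞) := by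
  have h1 : a.mapToSubgraph.length = a.length := by
    have := congrArg Walk.length a.map_mapToSubgraph_hom
    rwa [Walk.length_map] at this
  have := (a.mapToSubgraph.map (Subgraph.inclusion ha)).edist_le
  rw [Walk.length_map, h1] at this
  exact this

lemma exists_walk_le {u v : V} {k : ℕ} (h : G.edist u v ≤ (k : ℕ∞)) :
    ∃ q : G.Walk u v, q.length ≤ k := by
  have hr : G.Reachable u v := by
    apply reachable_of_edist_ne_top
    intro h'
    rw [h'] at h
    simp at h
  obtain ⟨q, hq⟩ := hr.exists_walk_length_eq_edist
  rw [← hq] at h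
  exact ⟨q, by exact_mod_cast h⟩

lemma ws_bypass [DecidableEq V] (N : ℕ)
    (hN : ∀ (x : V) (d : G.Walk x x), d.length ≤ N → ws F d = 0) {u v : V} (q : G.Walk u v) :
    q.length ≤ N → ws F q.bypass = ws F q := by
  induction q with
  | nil => intro _; simp [Walk.bypass]
  | @cons u v w h q ih =>
    intro hl
    rw [Walk.length_cons] at hl
    have ih' := ih (by omega)
    rw [ws_cons, ← ih', Walk.bypass]
    split_ifs with hs
    · have h1 := hN _ (Walk.cons h (q.bypass.takeUntil u hs)) (by
        have := q.bypass.length_takeUntil_le_length hs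
        have := q.length_bypass_le_length
        rw [Walk.length_cons]; omega)
      have h2 : ws F q.bypass = ws F (q.bypass.takeUntil u hs) + ws F (q.bypass.dropUntil u hs) := by
        rw [← ws_append, Walk.take_spec]
      rw [ws_cons] at h1
      rw [h2, ← add_assoc, h1, zero_add]
    · rw [ws_cons]

/-- A shortest odd closed walk is a geodesic cycle. -/
lemma exists_odd_geodesic_cycle (hodd : ∃ (x : V) (d : G.Walk x x), ws F d ≠ 0) :
    ∃ (x : V) (c : G.Walk x x), ws F c ≠ 0 ∧ c.IsCycle ∧
      ∀ u v : c.toSubgraph.verts, c.toSubgraph.coe.edist u v ≤ G.edist (u : V) (v : V) := by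
  classical
  have hex : ∃ L : ℕ, ∃ (x : V) (d : G.Walk x x), ws F d ≠ 0 ∧ d.length = L := by
    obtain ⟨x, d, hd⟩ := hodd
    exact ⟨_, x, d, hd, rfl⟩
  obtain ⟨x, c, hc, hL⟩ := Nat.find_spec hex
  have hmin : ∀ (y : V) (d : G.Walk y y), d.length < c.length → ws F d = 0 := by
    intro y d hd
    by_contra hne
    rw [hL] at hd
    exact Nat.find_min hex hd ⟨y, d, hne, rfl⟩
  refine ⟨x, c, hc, ?_, ?_⟩
  · clear hL
    cases c with
    | nil => simp [ws] at hc
    | @cons _ v _ h q =>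
      rw [Walk.length_cons] at hmin
      have hb : ws F q.bypass = ws F q := ws_bypass F q.length
        (fun y d hd => hmin y d (by omega)) q le_rfl
      have hle : q.length ≤ q.bypass.length := by
        by_contra hlt
        apply hc
        rw [ws_cons, ← hb, ← ws_cons F h]
        apply hmin
        rw [Walk.length_cons]; omega
      have hq : q.IsPath := by
        rw [← q.bypass_eq_self_of_length_le_length_bypass hle]
        exact q.bypass_isPath
      rw [Walk.cons_isCycle_iff]
      refine ⟨hq, fun he => ?_⟩
      cases q with
      | nil => simp at he
      | @cons _ y _ h' q' =>
        rw [Walk.cons_isPath_iff] at hq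
        rw [Walk.edges_cons, List.mem_cons] at he
        rcases he with he | he
        · have hy : y = x := by
            rw [Sym2.eq_iff] at he
            rcases he with ⟨h1, h2⟩ | ⟨h1, h2⟩
            · exact absurd h1 h.ne
            · exact h1.symm
          subst hy
          have := Walk.eq_nil_iff_nil.2 (Walk.isPath_iff_nil.1 hq.1)
          subst this
          apply hc
          rw [ws_cons, ws_cons, ws_nil, add_zero, Sym2.eq_swap, zmod2_self]
        · exact hq.2 (q'.snd_mem_support_of_mem_edges he)
  · rintro ⟨u, hu⟩ ⟨v, hv⟩
    have hu' := c.mem_verts_toSubgraph.1 hu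
    have hv' := c.mem_verts_toSubgraph.1 hv
    obtain ⟨a, b, h1, h2, h3⟩ := split_closed F c hu' hv'
    by_contra hlt
    rw [not_le] at hlt
    change G.edist u v < _ at hlt
    have ha := coe_edist_le a (h3 ▸ le_sup_left) hu hv
    have hb := coe_edist_le b.reverse (by rw [Walk.toSubgraph_reverse]; exact h3 ▸ le_sup_right) hu hv
    rw [Walk.length_reverse] at hb
    have hr : G.Reachable u v := ⟨a⟩
    obtain ⟨q, hq⟩ := hr.exists_walk_length_eq_edist
    rw [← hq] at hlt
    have hqa : q.length < a.length := by exact_mod_cast hlt.trans_le ha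
    have hqb : q.length < b.length := by exact_mod_cast hlt.trans_le hb
    have e1 := hmin u (a.append q.reverse) (by simp; omega)
    have e2 := hmin u (q.append b) (by simp; omega)
    rw [ws_append, ws_reverse] at e1
    rw [ws_append] at e2
    apply hc
    rw [← h2]
    calc ws F a + ws F b = (ws F a + ws F q) + (ws F q + ws F b) := by
          rw [add_assoc, ← add_assoc (ws F q), zmod2_self, zero_add]
      _ = 0 := by rw [e1, e2, add_zero]

lemma ws_zero_of {u v : V} (q : G.Walk u v)
    (h : ∀ x ∈ q.support, ∀ y ∈ q.support, F s(x, y) = 0) : ws F q = 0 := by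
  induction q with
  | nil => simp [ws]
  | cons h' q ih =>
    rw [ws_cons, h _ (by simp) _ (by simp), ih, add_zero]
    intro x hx y hy
    exact h x (by simp [hx]) y (by simp [hy])

lemma ws_ne_zero {u v : V} (q : G.Walk u v) (h : ws F q ≠ 0) : ∃ e ∈ q.edges, F e ≠ 0 := by
  by_contra hh
  push Not at hh
  apply h
  unfold ws
  apply List.sum_eq_zero
  intro a ha
  obtain ⟨e, he, rfl⟩ := List.mem_map.1 ha
  exact hh e he

end aux

/-- Let `r, n, m₀, m₁ : ℕ` with `m := n - m₀ - m₁ - 2r > 0`, let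
`p₀ … p_n` be a geodesic path in `G`, and write `B_i` for the ball of radius `r` around
`p_i`. If a component `C` of `G` minus all the balls `B_i` has a neighbour both in
`⋃_{i ≤ m₀} B_i` and in `⋃_{i ≥ n - m₁} B_i` but none in any `B_i` with
`m₀ < i < n - m₁`, then `G` contains a geodesic cycle of length at least `2m`. -/
theorem long_geodesic_cycle_of_component_attaching_to_both_ends
    {V : Type*} [Fintype V] (G : SimpleGraph V) (r n m₀ m₁ : ℕ)
    (hm : m₀ + m₁ + 2 * r < n)
    (p : Fin (n + 1) → V)
    (hadj : ∀ i : Fin n, G.Adj (p i.castSucc) (p i.succ))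
    (hgeo : ∀ i j : Fin (n + 1), i ≤ j →
      G.edist (p i) (p j) = ((j.val - i.val : ℕ) : ℕ∞))
    (C : Set V)
    (hC : IsCompOf G C {v : V | ∃ i : Fin (n + 1), G.edist (p i) v ≤ (r : ℕ∞)})
    (hbot : ∃ x ∈ C, ∃ y : V, G.Adj x y ∧
      ∃ i : Fin (n + 1), i.val ≤ m₀ ∧ G.edist (p i) y ≤ (r : ℕ∞))
    (htop : ∃ x ∈ C, ∃ y : V, G.Adj x y ∧
      ∃ i : Fin (n + 1), n - m₁ ≤ i.val ∧ G.edist (p i) y ≤ (r : ℕ∞))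
    (hmid : ∀ x ∈ C, ∀ y : V, G.Adj x y → ∀ i : Fin (n + 1),
      m₀ < i.val → i.val < n - m₁ → ¬ G.edist (p i) y ≤ (r : ℕ∞)) :
    ∃ (w : V) (cyc : G.Walk w w), cyc.IsCycle ∧
      2 * (n - m₀ - m₁ - 2 * r) ≤ cyc.length ∧
      IsQuasiGeodesic G cyc.toSubgraph 1 := by
  classical
  obtain ⟨hCne, hCdisj, hCconn, hCmax⟩ := hC
  have hCX : ∀ x ∈ C, ∀ i : Fin (n + 1), ¬ G.edist (p i) x ≤ (r : ℕ∞) := by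
    intro x hx i hi
    exact Set.disjoint_left.1 hCdisj hx ⟨i, hi⟩
  -- distance between bottom and top
  have hdist : ∀ (y z : V) (i j : Fin (n + 1)), i.val ≤ m₀ → n - m₁ ≤ j.val →
      G.edist (p i) y ≤ (r : ℕ∞) → G.edist (p j) z ≤ (r : ℕ∞) → ∀ q : G.Walk y z,
      n - m₀ - m₁ - 2 * r ≤ q.length := by
    intro y z i j hi hj hy hz q
    obtain ⟨a, ha⟩ := exists_walk_le hy
    obtain ⟨b, hb⟩ := exists_walk_le hz
    have h1 := ((a.append q).append b.reverse).edist_le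
    rw [hgeo i j (Fin.le_def.2 (by omega))] at h1
    have h2 : j.val - i.val ≤ ((a.append q).append b.reverse).length := by exact_mod_cast h1
    rw [Walk.length_append, Walk.length_append, Walk.length_reverse] at h2
    omega
  have hBT : ∀ (y : V) (i j : Fin (n + 1)), i.val ≤ m₀ → n - m₁ ≤ j.val →
      G.edist (p i) y ≤ (r : ℕ∞) → G.edist (p j) y ≤ (r : ℕ∞) → False := by
    intro y i j hi hj hy hz
    have := hdist y y i j hi hj hy hz Walk.nil
    rw [Walk.length_nil] at this
    omega
  -- neighbours of `C` lie in the balls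
  have hnb : ∀ x ∈ C, ∀ y, G.Adj x y → y ∉ C → ∃ i : Fin (n + 1), G.edist (p i) y ≤ (r : ℕ∞) := by
    intro x hx y hxy hy
    by_contra hno
    apply hy
    have hs : (G.induce ({y} : Set V)).Preconnected := by
      rintro ⟨a, ha⟩ ⟨b, hb⟩
      rw [Set.mem_singleton_iff] at ha hb
      subst ha; subst hb
      exact Reachable.refl _
    have hconn := connected_induce_union hCconn.preconnected hs hx (Set.mem_singleton y) hxy
    have := hCmax (C ∪ {y}) Set.subset_union_left (by
      rw [Set.disjoint_union_left]
      exact ⟨hCdisj, Set.disjoint_singleton_left.2 hno⟩) hconn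
    rw [← this]
    exact Or.inr rfl
  let T : V → Prop := fun y => ∃ j : Fin (n + 1), n - m₁ ≤ j.val ∧ G.edist (p j) y ≤ (r : ℕ∞)
  let B : V → Prop := fun y => ∃ j : Fin (n + 1), j.val ≤ m₀ ∧ G.edist (p j) y ≤ (r : ℕ∞)
  let F : Sym2 V → ZMod 2 := fun e => if ∃ x ∈ C, ∃ y, T y ∧ e = s(x, y) then 1 else 0
  have hTC : ∀ y, T y → y ∉ C := fun y ⟨j, _, h⟩ hy => hCX y hy j h
  have hBC : ∀ y, B y → y ∉ C := fun y ⟨j, _, h⟩ hy => hCX y hy j h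
  have hTB : ∀ y, T y → ¬ B y := fun y ⟨j, h1, h2⟩ ⟨i, h3, h4⟩ => hBT y i j h3 h1 h4 h2
  have hF1 : ∀ x ∈ C, ∀ y, T y → F s(x, y) = 1 := fun x hx y hy =>
    if_pos ⟨x, hx, y, hy, rfl⟩
  have hF0 : ∀ x y, (x ∈ C → ¬ T y) → (y ∈ C → ¬ T x) → F s(x, y) = 0 := by
    intro x y h1 h2
    apply if_neg
    rintro ⟨a, ha, b, hb, hab⟩
    rw [Sym2.eq_iff] at hab
    rcases hab with ⟨rfl, rfl⟩ | ⟨rfl, rfl⟩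
    · exact h1 ha hb
    · exact h2 ha hb
  -- walks inside the balls
  have hball : ∀ (i : Fin (n + 1)) (y : V), G.edist (p i) y ≤ (r : ℕ∞) →
      ∃ q : G.Walk (p i) y, ∀ z ∈ q.support, z ∉ C := by
    intro i y hy
    obtain ⟨q, hq⟩ := exists_walk_le hy
    refine ⟨q, fun z hz hzC => hCX z hzC i ?_⟩
    refine (q.takeUntil z hz).edist_le.trans ?_
    have := q.length_takeUntil_le_length hz
    exact_mod_cast this.trans hq
  have hpC : ∀ i, p i ∉ C := fun i hi => hCX _ hi i (by simp)
  have hpath : ∀ i : Fin (n + 1), ∃ q : G.Walk (p 0) (p i), ∀ z ∈ q.support, z ∉ C := by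
    intro i
    induction i using Fin.induction with
    | zero => exact ⟨Walk.nil, by simpa using hpC 0⟩
    | succ i ih =>
      obtain ⟨q, hq⟩ := ih
      refine ⟨q.concat (hadj i), fun z hz => ?_⟩
      rw [Walk.support_concat, List.mem_append, List.mem_singleton] at hz
      rcases hz with hz | rfl
      · exact hq z hz
      · exact hpC _
  have hzero : ∀ (a b : V) (q : G.Walk a b), (∀ z ∈ q.support, z ∉ C) → ws F q = 0 := by
    intro a b q hq
    apply ws_zero_of
    intro x hx y hy
    exact hF0 x y (fun h => absurd h (hq x hx)) (fun h => absurd h (hq y hy))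
  -- an odd closed walk
  have hodd : ∃ (x : V) (d : G.Walk x x), ws F d ≠ 0 := by
    obtain ⟨x, hx, y, hxy, i, hi, hiy⟩ := hbot
    obtain ⟨x', hx', y', hxy', j, hj, hjy⟩ := htop
    obtain ⟨a, ha⟩ := hball i y hiy
    obtain ⟨b, hb⟩ := hball j y' hjy
    obtain ⟨a', ha'⟩ := hpath i
    obtain ⟨b', hb'⟩ := hpath j
    obtain ⟨q⟩ := hCconn.preconnected ⟨x, hx⟩ ⟨x', hx'⟩
    let q' : G.Walk x x' := q.map (Embedding.induce C).toHom
    have hq' : ws F q' = 0 := by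
      apply ws_zero_of
      intro u hu v hv
      have hin : ∀ z ∈ q'.support, z ∈ C := by
        intro z hz
        have hz := (congrArg (z ∈ ·) (Walk.support_map (Embedding.induce C).toHom q)).mp hz
        rw [List.mem_map] at hz
        obtain ⟨w, _, rfl⟩ := hz
        exact w.2
      exact hF0 u v (fun _ h => hTC v h (hin v hv)) (fun _ h => hTC u h (hin u hu))
    refine ⟨y, Walk.cons hxy.symm (q'.append (Walk.cons hxy'
      (b.reverse.append (b'.reverse.append (a'.append a))))), ?_⟩
    rw [ws_cons, ws_append, ws_cons, ws_append, ws_append, ws_append, ws_reverse, ws_reverse,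
      hq', hzero _ _ a ha, hzero _ _ b hb, hzero _ _ a' ha', hzero _ _ b' hb',
      hF1 x' hx' y' ⟨j, hj, hjy⟩,
      hF0 y x (fun h => absurd h (hBC y ⟨i, hi, hiy⟩)) (fun _ h => hTB y h ⟨i, hi, hiy⟩)]
    simp
  -- walks avoiding the bottom
  let ind : V → ZMod 2 := fun v => if v ∈ C then 1 else 0
  have hnoB : ∀ (a b : V) (q : G.Walk a b), (∀ z ∈ q.support, ¬ B z) → ws F q = ind a + ind b := by
    intro a b q
    induction q with
    | nil => intro _; rw [ws_nil, zmod2_self]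
    | @cons u v w h q ih =>
      intro hq
      have ih' := ih (fun z hz => hq z (by simp [hz]))
      have hTop : ∀ s t, s ∈ C → G.Adj s t → t ∉ C → ¬ B t → T t := by
        intro s t hs hst ht hBt
        obtain ⟨k, hk⟩ := hnb s hs t hst ht
        refine ⟨k, ?_, hk⟩
        by_contra hlt
        refine hmid s hs t hst k ?_ (by omega) hk
        by_contra hle
        exact hBt ⟨k, by omega, hk⟩
      have hstep : F s(u, v) = ind u + ind v := by
        by_cases hu : u ∈ C <;> by_cases hv : v ∈ C
        · rw [hF0 u v (fun _ h => hTC v h hv) (fun _ h => hTC u h hu)]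
          simp only [ind, if_pos hu, if_pos hv, zmod2_self]
        · rw [hF1 u hu v (hTop u v hu h hv (hq v (by simp)))]
          simp only [ind, if_pos hu, if_neg hv, add_zero]
        · rw [Sym2.eq_swap, hF1 v hv u (hTop v u hv h.symm hu (hq u (by simp)))]
          simp only [ind, if_neg hu, if_pos hv, zero_add]
        · rw [hF0 u v (fun h => absurd h hu) (fun h => absurd h hv)]
          simp only [ind, if_neg hu, if_neg hv, add_zero]
      rw [ws_cons, ih', hstep, add_assoc, ← add_assoc (ind v), zmod2_self, zero_add]
  obtain ⟨w, c, hc, hcyc, hgeoc⟩ := exists_odd_geodesic_cycle F hodd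
  refine ⟨w, c, hcyc, ?_, fun u v => by rw [Nat.cast_one, one_mul]; exact hgeoc u v⟩
  have hb : ∃ b ∈ c.support, B b := by
    by_contra hno
    apply hc
    rw [hnoB _ _ c (fun z hz hB => hno ⟨z, hz, hB⟩), zmod2_self]
  have ht : ∃ t ∈ c.support, T t := by
    obtain ⟨e, he, hFe⟩ := ws_ne_zero F c hc
    by_contra hno
    apply hFe
    apply if_neg
    rintro ⟨a, _, b, hb, rfl⟩
    exact hno ⟨b, c.snd_mem_support_of_mem_edges he, hb⟩
  obtain ⟨b, hbc, i, hi, hib⟩ := hb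
  obtain ⟨t, htc, j, hj, hjt⟩ := ht
  obtain ⟨q1, q2, hl, -, -⟩ := split_closed F c hbc htc
  have l1 := hdist b t i j hi hj hib hjt q1
  have l2 := hdist b t i j hi hj hib hjt q2.reverse
  rw [Walk.length_reverse] at l2
  omega

end RadialPaper
end
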